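/- arXiv:2502.18099 — 6 statements merged into one kernel-verified Lean document; each statement's English description precedes it below -/
import Mathlib

section
/- Fix an integer N ≥ 1, points ξ_1, …, ξ_N ∈ ℝ, and ε ≥ 0, and let α̂ = (1/N) Σ_{i=1}^N δ_{ξ_i} be their empirical measure. Then sup { ∫ ℓ dα : α ∈ U_ε(α̂) } = (1/N) Σ_{i=1}^N ℓ(ξ_i) + ε, where ℓ(ξ) = -log σ(ξ) = log(1+e^{-ξ}); equivalently, inf { ∫ log σ dα : α ∈ U_ε(α̂) } = (1/N) Σ_{i=1}^N log σ(ξ_i) − ε. -/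
open MeasureTheory ENNReal Real

/-- The logistic sigmoid σ(x) = 1/(1+e^{-x}). -/
noncomputable def logisticSigma (x : ℝ) : ℝ := 1 / (1 + Real.exp (-x))

/-- The logistic loss ℓ(ξ) = -log σ(ξ) = log(1+e^{-ξ}). -/
noncomputable def logisticLoss (x : ℝ) : ℝ := Real.log (1 + Real.exp (-x))

/-- γ is a coupling of α and β: its marginals are α and β. -/
def IsCoupling (γ : Measure (ℝ × ℝ)) (α β : Measure ℝ) : Prop :=
  γ.map Prod.fst = α ∧ γ.map Prod.snd = β

/-- Transport cost of a coupling: ∫ |x - y| dγ(x,y). -/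
noncomputable def transportCost (γ : Measure (ℝ × ℝ)) : ℝ≥0∞ :=
  ∫⁻ p, ENNReal.ofReal |p.1 - p.2| ∂γ

/-- The 1-Wasserstein ε-ball around ν: Borel probability measures admitting a
coupling with ν of transport cost at most ε. -/
def Uball (ε : ℝ) (ν : Measure ℝ) : Set (Measure ℝ) :=
  {α | IsProbabilityMeasure α ∧
    ∃ γ : Measure (ℝ × ℝ), IsCoupling γ α ν ∧ transportCost γ ≤ ENNReal.ofReal ε}

/-!
The bound `≤` is the easy half of Kantorovich duality: `ℓ` is `1`-Lipschitz, so moving mass by a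
total distance `ε` changes `∫ ℓ` by at most `ε`. Since `ℓ` only attains the slope `-1` at `-∞`, the
supremum is approached but not reached: shift the fraction `ε / s` of the mass by `s` to the left,
at cost `ε`, and let `s → ∞`. The gain tends to `ε` by dominated convergence.
-/

section Coupling

open scoped NNReal

variable {γ γ₁ γ₂ : Measure (ℝ × ℝ)} {α α₁ α₂ β β₁ β₂ : Measure ℝ}

lemma IsCoupling.add (h₁ : IsCoupling γ₁ α₁ β₁) (h₂ : IsCoupling γ₂ α₂ β₂) :
    IsCoupling (γ₁ + γ₂) (α₁ + α₂) (β₁ + β₂) :=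
  ⟨by rw [Measure.map_add _ _ measurable_fst, h₁.1, h₂.1],
    by rw [Measure.map_add _ _ measurable_snd, h₁.2, h₂.2]⟩

lemma IsCoupling.smul (c : ℝ≥0) (h : IsCoupling γ α β) : IsCoupling (c • γ) (c • α) (c • β) :=
  ⟨by rw [Measure.map_smul, h.1], by rw [Measure.map_smul, h.2]⟩

lemma isCoupling_map_graph {T : ℝ → ℝ} (hT : Measurable T) (ν : Measure ℝ) :
    IsCoupling (ν.map fun x => (T x, x)) (ν.map T) ν := by
  have hgraph : Measurable fun x => (T x, x) := hT.prodMk measurable_id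
  refine ⟨Measure.map_map measurable_fst hgraph, ?_⟩
  exact (Measure.map_map measurable_snd hgraph).trans Measure.map_id

lemma transportCost_add (γ₁ γ₂ : Measure (ℝ × ℝ)) :
    transportCost (γ₁ + γ₂) = transportCost γ₁ + transportCost γ₂ :=
  lintegral_add_measure _ _ _

lemma transportCost_smul (c : ℝ≥0) (γ : Measure (ℝ × ℝ)) :
    transportCost (c • γ) = c * transportCost γ :=
  lintegral_smul_measure c _

lemma transportCost_map_graph {T : ℝ → ℝ} (hT : Measurable T) (ν : Measure ℝ) :
    transportCost (ν.map fun x => (T x, x)) = ∫⁻ x, ENNReal.ofReal |T x - x| ∂ν :=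
  lintegral_map (by fun_prop) (hT.prodMk measurable_id)

lemma integrable_abs_sub_of_transportCost_ne_top (h : transportCost γ ≠ ∞) :
    Integrable (fun p : ℝ × ℝ => |p.1 - p.2|) γ :=
  ⟨by fun_prop, (hasFiniteIntegral_iff_ofReal (.of_forall fun _ => abs_nonneg _)).2 h.lt_top⟩

lemma integral_abs_sub_eq_toReal_transportCost (γ : Measure (ℝ × ℝ)) :
    ∫ p, |p.1 - p.2| ∂γ = (transportCost γ).toReal :=
  integral_eq_lintegral_of_nonneg_ae (.of_forall fun _ => abs_nonneg _) (by fun_prop)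

end Coupling

section Lipschitz

open scoped NNReal

variable {K : ℝ≥0} {f : ℝ → ℝ} {ε : ℝ} {γ : Measure (ℝ × ℝ)} {α ν : Measure ℝ}

lemma integrable_of_isCoupling_of_transportCost_ne_top (hf : LipschitzWith K f)
    (hν : Integrable f ν) (hγ : IsCoupling γ α ν) (hcost : transportCost γ ≠ ∞) :
    Integrable f α := by
  obtain ⟨rfl, rfl⟩ := hγ
  have hsnd : Integrable (fun p : ℝ × ℝ => f p.2) γ := hν.comp_measurable measurable_snd
  have hdist := integrable_abs_sub_of_transportCost_ne_top hcost
  have hdiff : Integrable (fun p : ℝ × ℝ => f p.1 - f p.2) γ :=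
    (hdist.const_mul K).mono'
      ((hf.continuous.comp continuous_fst).sub
        (hf.continuous.comp continuous_snd)).aestronglyMeasurable
      (.of_forall fun p => hf.dist_le_mul p.1 p.2)
  rw [integrable_map_measure hf.continuous.aestronglyMeasurable measurable_fst.aemeasurable]
  exact (hdiff.add hsnd).congr (.of_forall fun p => sub_add_cancel (f p.1) (f p.2))

lemma integral_le_integral_add_mul_toReal_transportCost (hf : LipschitzWith K f)
    (hν : Integrable f ν) (hγ : IsCoupling γ α ν) (hcost : transportCost γ ≠ ∞) :
    ∫ x, f x ∂α ≤ ∫ x, f x ∂ν + K * (transportCost γ).toReal := by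
  have hα := integrable_of_isCoupling_of_transportCost_ne_top hf hν hγ hcost
  obtain ⟨rfl, rfl⟩ := hγ
  have hfst : Integrable (fun p : ℝ × ℝ => f p.1) γ := hα.comp_measurable measurable_fst
  have hsnd : Integrable (fun p : ℝ × ℝ => f p.2) γ := hν.comp_measurable measurable_snd
  have hdist := (integrable_abs_sub_of_transportCost_ne_top hcost).const_mul (K : ℝ)
  rw [integral_map measurable_fst.aemeasurable hf.continuous.aestronglyMeasurable,
    integral_map measurable_snd.aemeasurable hf.continuous.aestronglyMeasurable]
  calc ∫ p, f p.1 ∂γ ≤ ∫ p, (f p.2 + K * |p.1 - p.2|) ∂γ :=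
        integral_mono hfst (hsnd.add hdist) fun p => hf.le_add_mul p.1 p.2
    _ = ∫ p, f p.2 ∂γ + K * (transportCost γ).toReal := by
        rw [integral_add hsnd hdist, integral_const_mul,
          integral_abs_sub_eq_toReal_transportCost]

lemma integral_le_integral_add_mul_of_mem_uball (hf : LipschitzWith K f) (hν : Integrable f ν)
    (hε : 0 ≤ ε) (hα : α ∈ Uball ε ν) : ∫ x, f x ∂α ≤ ∫ x, f x ∂ν + K * ε := by
  obtain ⟨-, γ, hγ, hcost⟩ := hα
  have hfinite : transportCost γ ≠ ∞ := ne_top_of_le_ne_top ofReal_ne_top hcost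
  have hcost_real : (transportCost γ).toReal ≤ ε := toReal_le_of_le_ofReal hε hcost
  refine (integral_le_integral_add_mul_toReal_transportCost hf hν hγ hfinite).trans ?_
  gcongr

lemma integrable_comp_sub_const [IsFiniteMeasure ν] (hf : LipschitzWith K f)
    (hν : Integrable f ν) (s : ℝ) : Integrable (fun x => f (x - s)) ν := by
  have hdiff : Integrable (fun x => f (x - s) - f x) ν := by
    refine .of_bound ((hf.continuous.comp (continuous_sub_right s)).sub
      hf.continuous).aestronglyMeasurable (K * |s|) (.of_forall fun x => ?_)
    simpa [Real.dist_eq] using hf.dist_le_mul (x - s) x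
  exact (hdiff.add hν).congr (.of_forall fun x => sub_add_cancel (f (x - s)) (f x))

end Lipschitz

section RecessionSlope

open scoped NNReal Topology
open Filter

variable {K : ℝ≥0} {L : ℝ} {f : ℝ → ℝ} {ν : Measure ℝ}

lemma tendsto_comp_sub_div_atTop (hf : LipschitzWith K f)
    (hslope : Tendsto (fun s => f (-s) / s) atTop (𝓝 L)) (x : ℝ) :
    Tendsto (fun s => f (x - s) / s) atTop (𝓝 L) := by
  have hdiff : Tendsto (fun s => (f (x - s) - f (-s)) / s) atTop (𝓝 0) := by
    refine squeeze_zero_norm' ?_ (tendsto_const_nhds (x := K * |x|).div_atTop tendsto_id)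
    filter_upwards [eventually_gt_atTop 0] with s hs
    rw [norm_div, Real.norm_of_nonneg hs.le, id_eq]
    gcongr
    simpa [Real.dist_eq] using hf.dist_le_mul (x - s) (-s)
  simpa [sub_div] using hdiff.add hslope

lemma tendsto_integral_comp_sub_div_atTop [IsProbabilityMeasure ν] (hf : LipschitzWith K f)
    (hslope : Tendsto (fun s => f (-s) / s) atTop (𝓝 L)) (hν : Integrable f ν) :
    Tendsto (fun s => (∫ x, f (x - s) ∂ν) / s) atTop (𝓝 L) := by
  have hbound : ∀ᶠ s in atTop, ∀ᵐ x ∂ν, ‖f (x - s) / s‖ ≤ |f x| + K := by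
    filter_upwards [eventually_ge_atTop 1] with s hs
    refine .of_forall fun x => ?_
    have hdist : |f (x - s) - f x| ≤ K * s := by
      simpa [Real.dist_eq, abs_of_nonneg (zero_le_one.trans hs)] using hf.dist_le_mul (x - s) x
    rw [norm_div, Real.norm_of_nonneg (by linarith : 0 ≤ s), div_le_iff₀ (by linarith)]
    calc |f (x - s)| ≤ |f x| + |f (x - s) - f x| := by
          simpa using abs_add_le (f x) (f (x - s) - f x)
      _ ≤ |f x| * s + K * s := add_le_add (le_mul_of_one_le_right (abs_nonneg _) hs) hdist
      _ = (|f x| + K) * s := by ring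
  have hlim : Tendsto (fun s => ∫ x, f (x - s) / s ∂ν) atTop (𝓝 (∫ _, L ∂ν)) :=
    tendsto_integral_filter_of_dominated_convergence (fun x => |f x| + K)
      (.of_forall fun s =>
        ((hf.continuous.comp (continuous_sub_right s)).div_const s).aestronglyMeasurable)
      hbound (hν.abs.add (integrable_const _))
      (.of_forall fun x => tendsto_comp_sub_div_atTop hf hslope x)
  simpa [integral_div] using hlim

end RecessionSlope

section PartialShift

open scoped NNReal Topology
open Filter

/-- The measure obtained from `ν` by shifting the fraction `w ∈ [0, 1]` of its mass to the left by
`s`; these measures nearly attain the supremum over a Wasserstein ball. The subtraction `1 - w` is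
truncated, so the total mass is only preserved for `w ≤ 1`. -/
noncomputable def partialShift (ν : Measure ℝ) (w : ℝ≥0) (s : ℝ) : Measure ℝ :=
  (1 - w) • ν + w • ν.map (· - s)

variable {K w : ℝ≥0} {f : ℝ → ℝ} {ε s : ℝ} {ν : Measure ℝ}

lemma integral_partialShift [IsFiniteMeasure ν] (hf : LipschitzWith K f) (hν : Integrable f ν)
    (hw : w ≤ 1) (s : ℝ) :
    ∫ x, f x ∂(partialShift ν w s) = (1 - w) * ∫ x, f x ∂ν + w * ∫ x, f (x - s) ∂ν := by
  have hshift : AEMeasurable (· - s) ν := by fun_prop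
  have hf_meas : AEStronglyMeasurable f (ν.map (· - s)) := hf.continuous.aestronglyMeasurable
  have hν_shift : Integrable f (ν.map (· - s)) :=
    (integrable_map_measure hf_meas hshift).2 (integrable_comp_sub_const hf hν s)
  rw [partialShift, integral_add_measure hν.smul_measure_nnreal hν_shift.smul_measure_nnreal,
    integral_smul_nnreal_measure, integral_smul_nnreal_measure, integral_map hshift hf_meas]
  simp only [NNReal.smul_def, smul_eq_mul, NNReal.coe_sub hw, NNReal.coe_one]

variable [IsProbabilityMeasure ν]

lemma isProbabilityMeasure_partialShift (hw : w ≤ 1) (s : ℝ) :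
    IsProbabilityMeasure (partialShift ν w s) := by
  have : IsProbabilityMeasure (ν.map (· - s)) := Measure.isProbabilityMeasure_map (by fun_prop)
  constructor
  calc partialShift ν w s Set.univ = ((1 - w : ℝ≥0) : ℝ≥0∞) + w := by
        simp only [partialShift, Measure.add_apply, Measure.smul_apply, measure_univ,
          ENNReal.smul_def, smul_eq_mul, mul_one]
    _ = 1 := mod_cast tsub_add_cancel_of_le hw

lemma partialShift_mem_uball (hw : w ≤ 1) (hcost : w * |s| ≤ ε) :
    partialShift ν w s ∈ Uball ε ν := by
  have hstay : IsCoupling (ν.map fun x => (x, x)) ν ν := by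
    simpa using isCoupling_map_graph measurable_id ν
  have hstay_cost : transportCost (ν.map fun x => (x, x)) = 0 := by
    simpa using transportCost_map_graph measurable_id ν
  have hshift : Measurable (· - s : ℝ → ℝ) := measurable_sub_const s
  have hshift_cost : transportCost (ν.map fun x => (x - s, x)) = ENNReal.ofReal |s| := by
    simpa using transportCost_map_graph hshift ν
  refine ⟨isProbabilityMeasure_partialShift hw s,
    (1 - w) • ν.map (fun x => (x, x)) + w • ν.map (fun x => (x - s, x)), ?_, ?_⟩
  · have hcoupling := (hstay.smul (1 - w)).add ((isCoupling_map_graph hshift ν).smul w)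
    rwa [← add_smul, tsub_add_cancel_of_le hw, one_smul] at hcoupling
  · calc transportCost ((1 - w) • ν.map (fun x => (x, x)) + w • ν.map (fun x => (x - s, x)))
        = w * ENNReal.ofReal |s| := by
          rw [transportCost_add, transportCost_smul, transportCost_smul, hstay_cost, hshift_cost,
            mul_zero, zero_add]
      _ = ENNReal.ofReal (w * |s|) := by
          rw [ENNReal.ofReal_mul w.coe_nonneg, ofReal_coe_nnreal]
      _ ≤ ENNReal.ofReal ε := ofReal_le_ofReal hcost

lemma eventually_partialShift_mem_uball (hε : 0 ≤ ε) :
    ∀ᶠ s in atTop, partialShift ν (ε / s).toNNReal s ∈ Uball ε ν := by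
  filter_upwards [eventually_ge_atTop ε, eventually_gt_atTop 0] with s hεs hs
  refine partialShift_mem_uball (Real.toNNReal_le_one.2 ((div_le_one hs).2 hεs)) ?_
  rw [Real.coe_toNNReal _ (by positivity), abs_of_pos hs, div_mul_cancel₀ _ hs.ne']

lemma tendsto_integral_partialShift {L : ℝ} (hf : LipschitzWith K f)
    (hslope : Tendsto (fun s => f (-s) / s) atTop (𝓝 L)) (hν : Integrable f ν) (hε : 0 ≤ ε) :
    Tendsto (fun s => ∫ x, f x ∂(partialShift ν (ε / s).toNNReal s)) atTop
      (𝓝 (∫ x, f x ∂ν + L * ε)) := by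
  have hfraction : Tendsto (fun s : ℝ => ε / s) atTop (𝓝 0) :=
    tendsto_const_nhds.div_atTop tendsto_id
  have hlim : Tendsto (fun s => (1 - ε / s) * ∫ x, f x ∂ν + (∫ x, f (x - s) ∂ν) / s * ε) atTop
      (𝓝 ((1 - 0) * ∫ x, f x ∂ν + L * ε)) :=
    ((hfraction.const_sub 1).mul_const _).add
      ((tendsto_integral_comp_sub_div_atTop hf hslope hν).mul_const ε)
  rw [sub_zero, one_mul] at hlim
  refine hlim.congr' ?_
  filter_upwards [eventually_ge_atTop ε, eventually_gt_atTop 0] with s hεs hs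
  rw [integral_partialShift hf hν (Real.toNNReal_le_one.2 ((div_le_one hs).2 hεs)),
    Real.coe_toNNReal _ (by positivity)]
  ring

lemma isLUB_integral_uball (hf : LipschitzWith K f)
    (hslope : Tendsto (fun s => f (-s) / s) atTop (𝓝 (K : ℝ))) (hν : Integrable f ν)
    (hε : 0 ≤ ε) :
    IsLUB ((fun α => ∫ x, f x ∂α) '' Uball ε ν) (∫ x, f x ∂ν + K * ε) := by
  refine ⟨?_, fun b hb => le_of_tendsto (tendsto_integral_partialShift hf hslope hν hε) ?_⟩
  · rintro _ ⟨α, hα, rfl⟩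
    exact integral_le_integral_add_mul_of_mem_uball hf hν hε hα
  · filter_upwards [eventually_partialShift_mem_uball (ν := ν) hε] with s hs
    exact hb ⟨_, hs, rfl⟩

lemma uball_nonempty (hε : 0 ≤ ε) : (Uball ε ν).Nonempty :=
  let ⟨_, hs⟩ := (eventually_partialShift_mem_uball hε).exists
  ⟨_, hs⟩

end PartialShift

section Logistic

open scoped Topology
open Filter

lemma log_logisticSigma (x : ℝ) : Real.log (logisticSigma x) = -logisticLoss x := by
  rw [logisticSigma, logisticLoss, one_div, Real.log_inv]

lemma logisticLoss_neg (x : ℝ) : logisticLoss (-x) = x + logisticLoss x := by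
  have hfactor : 1 + Real.exp x = Real.exp x * (1 + Real.exp (-x)) := by
    rw [mul_add, mul_one, ← Real.exp_add, add_neg_cancel, Real.exp_zero, add_comm]
  rw [logisticLoss, logisticLoss, neg_neg, hfactor,
    Real.log_mul (Real.exp_ne_zero x) (by positivity), Real.log_exp]

lemma lipschitzWith_logisticLoss : LipschitzWith 1 logisticLoss := by
  refine .of_le_add fun x y => ?_
  rw [logisticLoss, logisticLoss, Real.log_le_iff_le_exp (by positivity), Real.exp_add,
    Real.exp_log (by positivity), one_add_mul]
  have hone : 1 ≤ Real.exp (dist x y) := Real.one_le_exp dist_nonneg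
  have hexp : Real.exp (-x) ≤ Real.exp (-y) * Real.exp (dist x y) := by
    rw [← Real.exp_add, Real.exp_le_exp, Real.dist_eq]
    linarith [neg_abs_le (x - y)]
  exact add_le_add hone hexp

lemma tendsto_logisticLoss_atTop : Tendsto logisticLoss atTop (𝓝 0) := by
  have hexp : Tendsto (fun x => 1 + Real.exp (-x)) atTop (𝓝 1) := by
    simpa using Real.tendsto_exp_neg_atTop_nhds_zero.const_add 1
  rw [← Real.log_one]
  exact hexp.log one_ne_zero

lemma tendsto_logisticLoss_neg_div_atTop :
    Tendsto (fun s => logisticLoss (-s) / s) atTop (𝓝 1) := by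
  have hlim : Tendsto (fun s => 1 + logisticLoss s / s) atTop (𝓝 (1 + 0)) :=
    (tendsto_logisticLoss_atTop.div_atTop tendsto_id).const_add 1
  rw [add_zero] at hlim
  refine hlim.congr' ?_
  filter_upwards [eventually_ne_atTop 0] with s hs
  rw [logisticLoss_neg, add_div, div_self hs]

lemma isLUB_integral_logisticLoss_uball {ν : Measure ℝ} [IsProbabilityMeasure ν]
    (hν : Integrable logisticLoss ν) {ε : ℝ} (hε : 0 ≤ ε) :
    IsLUB ((fun α => ∫ x, logisticLoss x ∂α) '' Uball ε ν) (∫ x, logisticLoss x ∂ν + ε) := by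
  simpa using isLUB_integral_uball lipschitzWith_logisticLoss
    (by simpa using tendsto_logisticLoss_neg_div_atTop) hν hε

lemma isGLB_integral_log_logisticSigma_uball {ν : Measure ℝ} [IsProbabilityMeasure ν]
    (hν : Integrable logisticLoss ν) {ε : ℝ} (hε : 0 ≤ ε) :
    IsGLB ((fun α => ∫ x, Real.log (logisticSigma x) ∂α) '' Uball ε ν)
      (∫ x, Real.log (logisticSigma x) ∂ν - ε) := by
  simpa only [← Set.image_neg_eq_neg, Set.image_image, log_logisticSigma, integral_neg, neg_add']
    using (isLUB_integral_logisticLoss_uball hν hε).neg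

end Logistic

section EmpiricalMeasure

variable {ι X : Type*} [Fintype ι] [MeasurableSpace X]

/-- The empirical measure `|ι|⁻¹ ∑ i, δ_{ξ i}` of a finite family of points; it is the centre of
the Wasserstein ball of the theorem, with `ι = Fin N`. -/
noncomputable def empiricalMeasure (ξ : ι → X) : Measure X :=
  (Fintype.card ι : ℝ≥0∞)⁻¹ • ∑ i, Measure.dirac (ξ i)

instance isProbabilityMeasure_empiricalMeasure [Nonempty ι] (ξ : ι → X) :
    IsProbabilityMeasure (empiricalMeasure ξ) :=
  ⟨by simp [empiricalMeasure, ENNReal.inv_mul_cancel]⟩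

variable {E : Type*} [NormedAddCommGroup E] [MeasurableSingletonClass X]

lemma integrable_empiricalMeasure [Nonempty ι] (ξ : ι → X) (f : X → E) :
    Integrable f (empiricalMeasure ξ) :=
  (integrable_finsetSum_measure.2 fun _ _ => integrable_dirac (by simp)).smul_measure (by simp)

lemma integral_empiricalMeasure [NormedSpace ℝ E] [CompleteSpace E] (ξ : ι → X) (f : X → E) :
    ∫ x, f x ∂(empiricalMeasure ξ) = (Fintype.card ι : ℝ)⁻¹ • ∑ i, f (ξ i) := by
  rw [empiricalMeasure, integral_smul_measure,
    integral_finsetSum_measure fun _ _ => integrable_dirac (by simp)]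
  simp

end EmpiricalMeasure

theorem stmt1_general {ν : Measure ℝ} [IsProbabilityMeasure ν] (hν : Integrable logisticLoss ν)
    {ε : ℝ} (hε : 0 ≤ ε) :
    sSup ((fun α => ∫ x, logisticLoss x ∂α) '' Uball ε ν) = ∫ x, logisticLoss x ∂ν + ε ∧
    sInf ((fun α => ∫ x, Real.log (logisticSigma x) ∂α) '' Uball ε ν)
      = ∫ x, Real.log (logisticSigma x) ∂ν - ε :=
  ⟨(isLUB_integral_logisticLoss_uball hν hε).csSup_eq ((uball_nonempty hε).image _),
    (isGLB_integral_log_logisticSigma_uball hν hε).csInf_eq ((uball_nonempty hε).image _)⟩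

/-- closed-form follower value over the Wasserstein ball around the
empirical measure of ξ_1, …, ξ_N. -/
theorem stmt1 {N : ℕ} (hN : 1 ≤ N) (ξ : Fin N → ℝ) (ε : ℝ) (hε : 0 ≤ ε)
    (αhat : Measure ℝ)
    (hαhat : αhat = (N : ℝ≥0∞)⁻¹ • ∑ i, Measure.dirac (ξ i)) :
    sSup ((fun α => ∫ x, logisticLoss x ∂α) '' Uball ε αhat)
      = (N : ℝ)⁻¹ * ∑ i, logisticLoss (ξ i) + ε ∧
    sInf ((fun α => ∫ x, Real.log (logisticSigma x) ∂α) '' Uball ε αhat)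
      = (N : ℝ)⁻¹ * ∑ i, Real.log (logisticSigma (ξ i)) - ε := by
  obtain rfl : αhat = empiricalMeasure ξ := by simpa [empiricalMeasure] using hαhat
  have : NeZero N := ⟨Nat.one_le_iff_ne_zero.1 hN⟩
  simpa [integral_empiricalMeasure] using stmt1_general (integrable_empiricalMeasure ξ _) hε
end

section
/- Fix integers N, K ≥ 1, reals a ≤ b and ε ≥ 0, points ξ_1, …, ξ_N ∈ [a,b] with empirical measure α̂ = (1/N) Σ_{i=1}^N δ_{ξ_i}, and affine coefficients a_1, …, a_K, b_1, …, b_K ∈ ℝ; set ℓ̃(ξ) = max_{1≤k≤K} (a_k ξ + b_k). Let A be the set of Borel probability measures α on ℝ with α([a,b]) = 1 that admit a coupling with α̂ of transport cost at most ε. Call a pair of real matrices (s_{ik})_{i≤N,k≤K}, (q_{ik})_{i≤N,k≤K} feasible if s_{ik} ≥ 0 for all i,k, Σ_{k=1}^K s_{ik} = 1 for every i, (1/N) Σ_{i=1}^N Σ_{k=1}^K |q_{ik}| ≤ ε, and a·s_{ik} ≤ s_{ik} ξ_i − q_{ik} ≤ b·s_{ik} for all i,k. Then sup_{α ∈ A}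 ∫ ℓ̃ dα = sup over feasible (s,q) of (1/N) Σ_{i=1}^N Σ_{k=1}^K [ s_{ik}(a_k ξ_i + b_k) − a_k q_{ik} ], and the supremum over the feasible set of matrices is attained by some feasible pair (s*, q*). -/
open MeasureTheory ENNReal Real

/-!
Disintegrating a coupling of `α` with the empirical measure along the samples writes `α` as the
average of conditional laws `κ i` on `[a, b]` whose mean distances to `ξ i` average to at most `ε`.

Partition the line according to which affine piece attains the maximum, and move the part of `κ i`
on the `k`-th set to its barycentre `x k`, with mass `s k`. The loss is affine on that set, so
`∑ k, s k * (A k * x k + B k)` is exactly the expected loss under `κ i`, and by convexity of the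
norm the transport cost does not increase. Conversely, `∑ k, s k • δ (x k)` has expected loss at
least this sum, since each affine piece lies below the maximum.

The substitution `q k = s k * (ξ i - x k)` turns the data `(s, x)` into the constraints of the
program, with `∑ k, |q k|` as cost; where `s k = 0` the interval constraint forces `q k = 0`, so no
feasible pair is lost. The feasible set is thus the image of a product of simplices and cubes, cut
by a closed condition, hence compact, and the maximum is attained.
-/

theorem exists_measurable_partition_subset {X ι : Type*} [MeasurableSpace X] [Finite ι]
    {t : ι → Set X} (ht : ∀ i, MeasurableSet (t i)) :
    ∃ u : ι → Set X, (∀ i, MeasurableSet (u i)) ∧ Pairwise (Function.onFun Disjoint u) ∧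
      (∀ i, u i ⊆ t i) ∧ ⋃ i, u i = ⋃ i, t i := by
  obtain ⟨n, ⟨e⟩⟩ := Finite.exists_equiv_fin ι
  refine ⟨fun i ↦ disjointed (t ∘ e.symm) (e i), fun i ↦ ?_,
    (disjoint_disjointed _).comp_of_injective e.injective, fun i ↦ ?_, ?_⟩
  · exact disjointedRec (fun _ _ h ↦ h.diff (ht _)) (ht _)
  · simpa using disjointed_subset (t ∘ e.symm) (e i)
  · rw [e.surjective.iUnion_comp (disjointed (t ∘ e.symm)), iUnion_disjointed]
    exact e.symm.surjective.iUnion_comp t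

section Barycenter

variable {E : Type*} [NormedAddCommGroup E] [NormedSpace ℝ E] [CompleteSpace E]

theorem exists_mem_measureReal_smul_eq_setIntegral {X : Type*} [MeasurableSpace X]
    {μ : Measure X} [IsFiniteMeasure μ] {f : X → E} {C : Set E} (hC : Convex ℝ C)
    (hC_closed : IsClosed C) (hC_nonempty : C.Nonempty) (hfC : ∀ᵐ y ∂μ, f y ∈ C)
    (hf : Integrable f μ) (t : Set X) :
    ∃ x ∈ C, μ.real t • x = ∫ y in t, f y ∂μ := by
  by_cases ht : μ t = 0
  · obtain ⟨x, hx⟩ := hC_nonempty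
    exact ⟨x, hx, by simp [Measure.real, ht, Measure.restrict_eq_zero.2 ht]⟩
  · exact ⟨⨍ y in t, f y ∂μ, hC.set_average_mem hC_closed ht (measure_ne_top μ t)
      (ae_restrict_of_ae hfC) hf.integrableOn, measure_smul_setAverage f (measure_ne_top μ t)⟩

variable [MeasurableSpace E] {μ : Measure E} [IsFiniteMeasure μ] {t : Set E} {x : E}

theorem measureReal_mul_affine_eq_setIntegral (hμ : Integrable (fun y ↦ y) μ)
    (hx : μ.real t • x = ∫ y in t, y ∂μ) (L : E →L[ℝ] ℝ) (c : ℝ) :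
    μ.real t * (L x + c) = ∫ y in t, (L y + c) ∂μ := by
  have hL : IntegrableOn (fun y ↦ L y) t μ := (L.integrable_comp hμ).integrableOn
  rw [integral_add hL (integrable_const c), L.integral_comp_comm hμ.integrableOn, ← hx]
  simp [mul_add]

theorem measureReal_mul_norm_sub_le_setIntegral (hμ : Integrable (fun y ↦ y) μ)
    (hx : μ.real t • x = ∫ y in t, y ∂μ) (z : E) :
    μ.real t * ‖x - z‖ ≤ ∫ y in t, ‖y - z‖ ∂μ :=
  calc μ.real t * ‖x - z‖ = ‖∫ y in t, (y - z) ∂μ‖ := by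
        rw [integral_sub hμ.integrableOn (integrable_const z), ← hx, setIntegral_const, ← smul_sub,
          norm_smul, Real.norm_of_nonneg measureReal_nonneg]
    _ ≤ ∫ y in t, ‖y - z‖ ∂μ := norm_integral_le_integral_norm _

end Barycenter

theorem integrable_ciSup {X ι : Type*} [MeasurableSpace X] [Finite ι] [Nonempty ι] {μ : Measure X}
    {f : ι → X → ℝ} (hf : ∀ k, Integrable (f k) μ) : Integrable (fun y ↦ ⨆ k, f k y) μ := by
  have := Fintype.ofFinite ι
  simp_rw [← Finset.sup'_univ_eq_ciSup, ← Finset.sup'_apply]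
  exact Finset.sup'_induction (p := (Integrable · μ)) _ f (fun _ h₁ _ h₂ ↦ h₁.sup h₂) fun k _ ↦ hf k

theorem integrable_ciSup_affine_of_ae_mem_Icc {ι : Type*} [Finite ι] [Nonempty ι] {a b : ℝ}
    {μ : Measure ℝ} [IsFiniteMeasure μ] (hμ : ∀ᵐ x ∂μ, x ∈ Set.Icc a b) (A B : ι → ℝ) :
    Integrable (fun x ↦ ⨆ k, A k * x + B k) μ :=
  integrable_ciSup fun k ↦ ((Integrable.of_mem_Icc a b aemeasurable_id hμ).const_mul (A k)).add
    (integrable_const (B k))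

theorem exists_stdSimplex_sum_eq_integral_ciSup_affine {E ι : Type*} [NormedAddCommGroup E]
    [NormedSpace ℝ E] [CompleteSpace E] [MeasurableSpace E] [BorelSpace E] [Fintype ι] [Nonempty ι]
    {μ : Measure E} [IsProbabilityMeasure μ] (hμ : Integrable (fun y ↦ y) μ) {C : Set E}
    (hC : Convex ℝ C) (hC_closed : IsClosed C) (hμC : ∀ᵐ y ∂μ, y ∈ C) (L : ι → E →L[ℝ] ℝ)
    (c : ι → ℝ) (z : E) :
    ∃ s ∈ stdSimplex ℝ ι, ∃ x : ι → E, (∀ k, x k ∈ C) ∧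
      ∑ k, s k * ‖x k - z‖ ≤ ∫ y, ‖y - z‖ ∂μ ∧
      ∑ k, s k * (L k (x k) + c k) = ∫ y, ⨆ k, L k y + c k ∂μ := by
  have hmeas (k : ι) : Measurable fun y ↦ L k y + c k := (L k).measurable.add_const _
  have hint : Integrable (fun y ↦ ⨆ k, L k y + c k) μ :=
    integrable_ciSup fun k ↦ ((L k).integrable_comp hμ).add (integrable_const _)
  obtain ⟨u, hu_meas, hu_disj, hu_sub, hu_union⟩ := exists_measurable_partition_subset
    fun k ↦ measurableSet_eq_fun (hmeas k) (Measurable.iSup hmeas)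
  have hu_univ : ⋃ k, u k = Set.univ := hu_union.trans <| Set.eq_univ_of_forall fun y ↦
    Set.mem_iUnion.2 (exists_eq_ciSup_of_finite (f := fun k ↦ L k y + c k))
  have sum_setIntegral {f : E → ℝ} (hf : Integrable f μ) :
      ∑ k, ∫ y in u k, f y ∂μ = ∫ y, f y ∂μ := by
    rw [← integral_iUnion_fintype hu_meas hu_disj fun _ ↦ hf.integrableOn, hu_univ,
      setIntegral_univ]
  choose x hxC hx using fun k ↦ exists_mem_measureReal_smul_eq_setIntegral hC hC_closed
    hμC.exists hμC hμ (u k)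
  refine ⟨fun k ↦ μ.real (u k), ⟨fun _ ↦ measureReal_nonneg, ?_⟩, x, hxC, ?_, ?_⟩
  · simpa using sum_setIntegral (integrable_const 1)
  · refine le_of_le_of_eq ?_ (sum_setIntegral (hμ.sub (integrable_const z)).norm)
    exact Finset.sum_le_sum fun k _ ↦ measureReal_mul_norm_sub_le_setIntegral hμ (hx k) z
  · rw [← sum_setIntegral hint]
    refine Finset.sum_congr rfl fun k _ ↦ ?_
    rw [measureReal_mul_affine_eq_setIntegral hμ (hx k)]
    exact setIntegral_congr_fun (hu_meas k) (hu_sub k)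

section Disintegration

open scoped ProbabilityTheory in
theorem exists_eq_sum_smul_prod_dirac {X Y n : Type*} [MeasurableSpace X] [StandardBorelSpace X]
    [Nonempty X] [MeasurableSpace Y] [Fintype n] {γ : Measure (X × Y)} [IsFiniteMeasure γ]
    {w : n → ℝ≥0∞} {y : n → Y}
    (hγ : γ.snd = ∑ i, w i • Measure.dirac (y i)) :
    ∃ κ : n → ProbabilityMeasure X,
      γ = ∑ i, w i • (κ i : Measure X).prod (Measure.dirac (y i)) := by
  let ρ : Measure (Y × X) := γ.map Prod.swap
  let κ (i : n) : ProbabilityMeasure X := ⟨ρ.condKernel (y i), inferInstance⟩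
  have hρ : ρ.fst = ∑ i, w i • Measure.dirac (y i) := by rw [Measure.fst_map_swap, hγ]
  refine ⟨κ, Measure.ext_of_lintegral _ fun f hf ↦ ?_⟩
  have hf_swap : Measurable fun p : Y × X ↦ f p.swap := hf.comp measurable_swap
  calc ∫⁻ p, f p ∂γ = ∫⁻ p, f p.swap ∂ρ := by rw [lintegral_map hf_swap measurable_swap]; rfl
    _ = ∫⁻ p, f p.swap ∂(ρ.fst ⊗ₘ ρ.condKernel) := by rw [ρ.disintegrate ρ.condKernel]
    _ = ∑ i, w i * ∫⁻ x, f (x, y i) ∂κ i := by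
      rw [Measure.lintegral_compProd hf_swap, hρ, lintegral_finsetSum_measure]
      simp only [lintegral_smul_measure, smul_eq_mul,
        lintegral_dirac' _ hf_swap.lintegral_kernel_prod_right', κ]
      rfl
    _ = ∫⁻ p, f p ∂(∑ i, w i • (κ i : Measure X).prod (Measure.dirac (y i))) := by
      simp [lintegral_finsetSum_measure, Measure.prod_dirac, lintegral_map hf,
        measurable_prodMk_right]

variable {n : Type*} [Fintype n]

theorem isCoupling_sum_smul_prod_dirac (w : n → ℝ≥0∞) (y : n → ℝ)
    (κ : n → ProbabilityMeasure ℝ) :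
    IsCoupling (∑ i, w i • (κ i : Measure ℝ).prod (Measure.dirac (y i)))
      (∑ i, w i • (κ i : Measure ℝ)) (∑ i, w i • Measure.dirac (y i)) := by
  constructor
  · simp [Measure.map_finset_sum measurable_fst.aemeasurable]
  · simp [Measure.map_finset_sum measurable_snd.aemeasurable]

theorem transportCost_sum_smul_prod_dirac (w : n → ℝ≥0∞) (y : n → ℝ)
    (κ : n → ProbabilityMeasure ℝ) :
    transportCost (∑ i, w i • (κ i : Measure ℝ).prod (Measure.dirac (y i))) =
      ∑ i, w i * ∫⁻ x, ENNReal.ofReal |x - y i| ∂κ i := by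
  have hc : Measurable fun p : ℝ × ℝ ↦ ENNReal.ofReal |p.1 - p.2| := by fun_prop
  simp [transportCost, lintegral_finsetSum_measure, Measure.prod_dirac, lintegral_map hc,
    measurable_prodMk_right]

theorem exists_isCoupling_transportCost_le_iff {α : Measure ℝ} [IsFiniteMeasure α] {w : n → ℝ≥0∞}
    {y : n → ℝ} {c : ℝ≥0∞} :
    (∃ γ, IsCoupling γ α (∑ i, w i • Measure.dirac (y i)) ∧ transportCost γ ≤ c) ↔
      ∃ κ : n → ProbabilityMeasure ℝ, α = ∑ i, w i • (κ i : Measure ℝ) ∧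
        ∑ i, w i * ∫⁻ x, ENNReal.ofReal |x - y i| ∂κ i ≤ c := by
  constructor
  · rintro ⟨γ, ⟨rfl, hsnd⟩, hcost⟩
    have : IsFiniteMeasure γ := Measure.isFiniteMeasure_of_map measurable_fst.aemeasurable
    obtain ⟨κ, rfl⟩ := exists_eq_sum_smul_prod_dirac hsnd
    exact ⟨κ, (isCoupling_sum_smul_prod_dirac w y κ).1,
      (transportCost_sum_smul_prod_dirac w y κ).symm.trans_le hcost⟩
  · rintro ⟨κ, rfl, hcost⟩
    exact ⟨_, isCoupling_sum_smul_prod_dirac w y κ,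
      (transportCost_sum_smul_prod_dirac w y κ).trans_le hcost⟩

end Disintegration

theorem integral_inv_smul_sum {X : Type*} [MeasurableSpace X] {N : ℕ} {μ : Fin N → Measure X}
    {f : X → ℝ} (hf : ∀ i, Integrable f (μ i)) :
    ∫ x, f x ∂((N : ℝ≥0∞)⁻¹ • ∑ i, μ i) = (N : ℝ)⁻¹ * ∑ i, ∫ x, f x ∂μ i := by
  simp [integral_smul_measure, integral_finsetSum_measure fun i _ ↦ hf i]

section AmbiguitySet

variable {N : ℕ} [NeZero N] {a b ε : ℝ} {ξ : Fin N → ℝ}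

/-- The Wasserstein ball around `ν` cut down to the probability measures carried by `[a, b]`; it is
the set over which the worst-case expectation is taken. -/
def ambiguitySet (a b ε : ℝ) (ν : Measure ℝ) : Set (Measure ℝ) :=
  {α | IsProbabilityMeasure α ∧ α (Set.Icc a b) = 1 ∧
    ∃ γ : Measure (ℝ × ℝ), IsCoupling γ α ν ∧ transportCost γ ≤ ENNReal.ofReal ε}

theorem isProbabilityMeasure_inv_smul_sum {X : Type*} [MeasurableSpace X]
    (κ : Fin N → ProbabilityMeasure X) :
    IsProbabilityMeasure ((N : ℝ≥0∞)⁻¹ • ∑ i, (κ i : Measure X)) := by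
  constructor
  simp [ENNReal.inv_mul_cancel, NeZero.ne N]

theorem sum_inv_mul_lintegral_abs_sub {κ : Fin N → ProbabilityMeasure ℝ}
    (hκ : ∀ i, ∀ᵐ x ∂(κ i : Measure ℝ), x ∈ Set.Icc a b) :
    ∑ i, (N : ℝ≥0∞)⁻¹ * ∫⁻ x, ENNReal.ofReal |x - ξ i| ∂κ i =
      ENNReal.ofReal ((N : ℝ)⁻¹ * ∑ i, ∫ x, |x - ξ i| ∂κ i) := by
  have hN : (0 : ℝ) < N := Nat.cast_pos.2 (NeZero.pos N)
  have hint (i : Fin N) : Integrable (fun x ↦ |x - ξ i|) (κ i : Measure ℝ) :=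
    ((Integrable.of_mem_Icc a b aemeasurable_id (hκ i)).sub (integrable_const _)).abs
  rw [ENNReal.ofReal_mul (by positivity), ENNReal.ofReal_inv_of_pos hN, ENNReal.ofReal_natCast,
    ENNReal.ofReal_sum_of_nonneg fun i _ ↦ integral_nonneg fun _ ↦ abs_nonneg _, Finset.mul_sum]
  simp only [ofReal_integral_eq_lintegral_ofReal (hint _) (ae_of_all _ fun _ ↦ abs_nonneg _)]

theorem mem_ambiguitySet_empirical_iff {α : Measure ℝ} (hε : 0 ≤ ε) :
    α ∈ ambiguitySet a b ε ((N : ℝ≥0∞)⁻¹ • ∑ i, Measure.dirac (ξ i)) ↔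
      ∃ κ : Fin N → ProbabilityMeasure ℝ, (∀ i, ∀ᵐ x ∂(κ i : Measure ℝ), x ∈ Set.Icc a b) ∧
        α = (N : ℝ≥0∞)⁻¹ • ∑ i, (κ i : Measure ℝ) ∧
        (N : ℝ)⁻¹ * ∑ i, ∫ x, |x - ξ i| ∂κ i ≤ ε := by
  have supported_iff (κ : Fin N → ProbabilityMeasure ℝ) :
      ((N : ℝ≥0∞)⁻¹ • ∑ i, (κ i : Measure ℝ)) (Set.Icc a b) = 1 ↔
        ∀ i, ∀ᵐ x ∂(κ i : Measure ℝ), x ∈ Set.Icc a b := by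
    have := isProbabilityMeasure_inv_smul_sum κ
    rw [← mem_ae_iff_prob_eq_one measurableSet_Icc, ← Filter.eventually_mem_set,
      Measure.ae_ennreal_smul_measure_iff (by simp), ae_finsetSum_measure_iff]
    simp only [Finset.mem_univ, true_imp_iff]
  have cost_iff {κ : Fin N → ProbabilityMeasure ℝ}
      (hκ : ∀ i, ∀ᵐ x ∂(κ i : Measure ℝ), x ∈ Set.Icc a b) :
      ∑ i, (N : ℝ≥0∞)⁻¹ * ∫⁻ x, ENNReal.ofReal |x - ξ i| ∂κ i ≤ ENNReal.ofReal ε ↔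
        (N : ℝ)⁻¹ * ∑ i, ∫ x, |x - ξ i| ∂κ i ≤ ε := by
    rw [sum_inv_mul_lintegral_abs_sub hκ, ENNReal.ofReal_le_ofReal_iff hε]
  constructor
  · rintro ⟨hα, hα_supp, hγ⟩
    rw [Finset.smul_sum] at hγ
    obtain ⟨κ, rfl, hcost⟩ := exists_isCoupling_transportCost_le_iff.1 hγ
    rw [← Finset.smul_sum] at hα_supp ⊢
    have hκ := (supported_iff κ).1 hα_supp
    exact ⟨κ, hκ, rfl, (cost_iff hκ).1 hcost⟩
  · rintro ⟨κ, hκ, rfl, hcost⟩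
    have := isProbabilityMeasure_inv_smul_sum κ
    refine ⟨this, (supported_iff κ).2 hκ, ?_⟩
    rw [Finset.smul_sum (f := fun i ↦ Measure.dirac (ξ i))]
    exact exists_isCoupling_transportCost_le_iff.2 ⟨κ, Finset.smul_sum, (cost_iff hκ).2 hcost⟩

end AmbiguitySet

section Rows

variable {ι : Type*} [Fintype ι] {a b z : ℝ} {p : (ι → ℝ) × (ι → ℝ)}

/-- The rows `(s, q)` that the program allows for the sample `z`. Up to the choice of atoms, such a
row is a probability measure `∑ k, s k • δ (x k)` on `[a, b]`, encoded through the masses `s k` and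
the mass-weighted displacements `q k = s k * (z - x k)`. -/
def feasibleRows (ι : Type*) [Fintype ι] (a b z : ℝ) : Set ((ι → ℝ) × (ι → ℝ)) :=
  {p | p.1 ∈ stdSimplex ℝ ι ∧ ∀ k, p.1 k * z - p.2 k ∈ Set.Icc (a * p.1 k) (b * p.1 k)}

/-- The contribution `∑ k, (s k * (A k * z + B k) - A k * q k)` of the sample `z` to the objective
of the program. -/
def rowValue (A B : ι → ℝ) (z : ℝ) (p : (ι → ℝ) × (ι → ℝ)) : ℝ :=
  ∑ k, (p.1 k * (A k * z + B k) - A k * p.2 k)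

theorem mul_sub_mem_Icc_mul_iff_exists {s q : ℝ} (hab : a ≤ b) (hs : 0 ≤ s) :
    s * z - q ∈ Set.Icc (a * s) (b * s) ↔ ∃ x ∈ Set.Icc a b, q = s * (z - x) := by
  rcases hs.eq_or_lt with rfl | hs
  · have hab' : ∃ x, a ≤ x ∧ x ≤ b := ⟨a, le_rfl, hab⟩
    simp [hab', le_antisymm_iff, and_comm]
  · calc s * z - q ∈ Set.Icc (a * s) (b * s) ↔ z - q / s ∈ Set.Icc a b := by
          simp only [Set.mem_Icc, ← le_div_iff₀ hs, ← div_le_iff₀ hs, sub_div,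
            mul_div_cancel_left₀ z hs.ne']
      _ ↔ ∃ x ∈ Set.Icc a b, q = s * (z - x) := by
          refine ⟨fun h ↦ ⟨_, h, by field_simp; ring⟩, ?_⟩
          rintro ⟨x, hx, rfl⟩
          rwa [mul_div_cancel_left₀ _ hs.ne', _root_.sub_sub_cancel]

theorem mem_feasibleRows_iff_exists (hab : a ≤ b) :
    p ∈ feasibleRows ι a b z ↔ p.1 ∈ stdSimplex ℝ ι ∧
      ∃ x : ι → ℝ, (∀ k, x k ∈ Set.Icc a b) ∧ p.2 = fun k ↦ p.1 k * (z - x k) := by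
  refine and_congr_right fun hs ↦ ?_
  simp only [mul_sub_mem_Icc_mul_iff_exists hab (hs.1 _), Classical.skolem, forall_and, funext_iff]

theorem isCompact_feasibleRows (hab : a ≤ b) : IsCompact (feasibleRows ι a b z) := by
  have himage : feasibleRows ι a b z =
      (fun r : (ι → ℝ) × (ι → ℝ) ↦ (r.1, fun k ↦ r.1 k * (z - r.2 k))) ''
        (stdSimplex ℝ ι ×ˢ Set.univ.pi fun _ ↦ Set.Icc a b) := by
    ext p
    rw [mem_feasibleRows_iff_exists hab]
    constructor
    · rintro ⟨hs, x, hx, hq⟩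
      exact ⟨(p.1, x), ⟨hs, fun k _ ↦ hx k⟩, Prod.ext rfl hq.symm⟩
    · rintro ⟨⟨s, x⟩, ⟨hs, hx⟩, rfl⟩
      exact ⟨hs, x, fun k ↦ hx k trivial, rfl⟩
  rw [himage]
  exact ((isCompact_stdSimplex ℝ ι).prod (isCompact_univ_pi fun _ ↦ isCompact_Icc)).image
    (by fun_prop)

theorem rowValue_mul_sub (A B s x : ι → ℝ) (z : ℝ) :
    rowValue A B z (s, fun k ↦ s k * (z - x k)) = ∑ k, s k * (A k * x k + B k) :=
  Finset.sum_congr rfl fun k _ ↦ by ring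

theorem sum_abs_mul_sub {s : ι → ℝ} (hs : ∀ k, 0 ≤ s k) (x : ι → ℝ) (z : ℝ) :
    ∑ k, |s k * (z - x k)| = ∑ k, s k * |x k - z| :=
  Finset.sum_congr rfl fun k _ ↦ by rw [abs_mul, abs_of_nonneg (hs k), abs_sub_comm]

theorem exists_probabilityMeasure_integral_eq_sum {X : Type*} [MeasurableSpace X]
    [MeasurableSingletonClass X] {s : ι → ℝ} (hs : s ∈ stdSimplex ℝ ι) (x : ι → X) :
    ∃ κ : ProbabilityMeasure X, (∀ᵐ y ∂(κ : Measure X), y ∈ Set.range x) ∧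
      ∀ f : X → ℝ, ∫ y, f y ∂κ = ∑ k, s k * f (x k) := by
  let κ : Measure X := ∑ k, ENNReal.ofReal (s k) • Measure.dirac (x k)
  have hκ : IsProbabilityMeasure κ := by
    constructor
    simp [κ, ← ENNReal.ofReal_sum_of_nonneg fun k _ ↦ hs.1 k, hs.2]
  refine ⟨⟨κ, hκ⟩, ?_, fun f ↦ ?_⟩
  · refine ae_finsetSum_measure_iff.2 fun k _ ↦ Measure.ae_smul_measure ?_ _
    simp [ae_dirac_eq]
  · have hint (k : ι) : Integrable f (ENNReal.ofReal (s k) • Measure.dirac (x k)) :=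
      (integrable_dirac (by simp)).smul_measure ENNReal.ofReal_ne_top
    simp [κ, integral_finsetSum_measure fun k _ ↦ hint k, ENNReal.toReal_ofReal (hs.1 _)]

theorem exists_mem_feasibleRows_rowValue_eq_integral [Nonempty ι] (hab : a ≤ b)
    {κ : ProbabilityMeasure ℝ} (hκ : ∀ᵐ x ∂(κ : Measure ℝ), x ∈ Set.Icc a b) (A B : ι → ℝ)
    (z : ℝ) :
    ∃ p ∈ feasibleRows ι a b z, ∑ k, |p.2 k| ≤ ∫ x, |x - z| ∂κ ∧
      rowValue A B z p = ∫ x, ⨆ k, A k * x + B k ∂κ := by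
  obtain ⟨s, hs, x, hx, hcost, hvalue⟩ := exists_stdSimplex_sum_eq_integral_ciSup_affine
    (Integrable.of_mem_Icc a b aemeasurable_id hκ) (convex_Icc a b) isClosed_Icc hκ
    (fun k ↦ A k • ContinuousLinearMap.id ℝ ℝ) B z
  refine ⟨(s, fun k ↦ s k * (z - x k)),
    (mem_feasibleRows_iff_exists hab).2 ⟨hs, x, hx, rfl⟩, ?_, ?_⟩
  · simpa only [sum_abs_mul_sub hs.1, Real.norm_eq_abs] using hcost
  · simpa [rowValue_mul_sub] using hvalue

theorem exists_probabilityMeasure_of_mem_feasibleRows (hab : a ≤ b)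
    (hp : p ∈ feasibleRows ι a b z) (A B : ι → ℝ) :
    ∃ κ : ProbabilityMeasure ℝ, (∀ᵐ x ∂(κ : Measure ℝ), x ∈ Set.Icc a b) ∧
      ∫ x, |x - z| ∂κ = ∑ k, |p.2 k| ∧ rowValue A B z p ≤ ∫ x, ⨆ k, A k * x + B k ∂κ := by
  obtain ⟨s, q⟩ := p
  obtain ⟨hs : s ∈ stdSimplex ℝ ι, x, hx, hq⟩ := (mem_feasibleRows_iff_exists hab).1 hp
  obtain rfl : q = fun k ↦ s k * (z - x k) := hq
  obtain ⟨κ, hκ, hint⟩ := exists_probabilityMeasure_integral_eq_sum hs x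
  refine ⟨κ, hκ.mono fun _ hy ↦ Set.range_subset_iff.2 hx hy, ?_, ?_⟩
  · rw [hint, sum_abs_mul_sub hs.1]
  · rw [hint, rowValue_mul_sub]
    gcongr with k
    · exact hs.1 k
    · exact le_ciSup (f := fun j ↦ A j * x k + B j) (Set.finite_range _).bddAbove k

end Rows

section Program

variable {N : ℕ} {ι : Type*} [Fintype ι] {a b ε : ℝ} {ξ : Fin N → ℝ}

/-- The feasible set of the program: pairs of matrices `(s, q)`, with one row for each sample `ξ i`,
whose average displacement `∑ k, |q i k|` is at most `ε`. -/
def feasiblePairs (ι : Type*) [Fintype ι] (a b ε : ℝ) (ξ : Fin N → ℝ) :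
    Set ((Fin N → ι → ℝ) × (Fin N → ι → ℝ)) :=
  {p | (∀ i, (p.1 i, p.2 i) ∈ feasibleRows ι a b (ξ i)) ∧ (N : ℝ)⁻¹ * ∑ i, ∑ k, |p.2 i k| ≤ ε}

/-- The objective of the program at a pair of matrices `(s, q)`, as a sample average. -/
noncomputable def programValue (A B : ι → ℝ) (ξ : Fin N → ℝ)
    (p : (Fin N → ι → ℝ) × (Fin N → ι → ℝ)) : ℝ :=
  (N : ℝ)⁻¹ * ∑ i, rowValue A B (ξ i) (p.1 i, p.2 i)

theorem isCompact_feasiblePairs (hab : a ≤ b) : IsCompact (feasiblePairs ι a b ε ξ) := by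
  have himage : {p : (Fin N → ι → ℝ) × (Fin N → ι → ℝ) |
      ∀ i, (p.1 i, p.2 i) ∈ feasibleRows ι a b (ξ i)} =
      (fun r : Fin N → (ι → ℝ) × (ι → ℝ) ↦ (fun i ↦ (r i).1, fun i ↦ (r i).2)) ''
        Set.univ.pi fun i ↦ feasibleRows ι a b (ξ i) := by
    ext p
    constructor
    · exact fun hp ↦ ⟨fun i ↦ (p.1 i, p.2 i), fun i _ ↦ hp i, rfl⟩
    · rintro ⟨r, hr, rfl⟩ i
      exact hr i trivial
  have hrows : IsCompact {p : (Fin N → ι → ℝ) × (Fin N → ι → ℝ) |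
      ∀ i, (p.1 i, p.2 i) ∈ feasibleRows ι a b (ξ i)} := by
    rw [himage]
    exact (isCompact_univ_pi fun _ ↦ isCompact_feasibleRows hab).image (by fun_prop)
  have hcost : IsClosed {p : (Fin N → ι → ℝ) × (Fin N → ι → ℝ) |
      (N : ℝ)⁻¹ * ∑ i, ∑ k, |p.2 i k| ≤ ε} := isClosed_le (by fun_prop) continuous_const
  exact hrows.inter_right hcost

theorem feasiblePairs_nonempty [Nonempty ι] (hε : 0 ≤ ε) (hξ : ∀ i, ξ i ∈ Set.Icc a b) :
    (feasiblePairs ι a b ε ξ).Nonempty := by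
  classical
  let s : ι → ℝ := Pi.single (Classical.arbitrary ι) 1
  have hs : s ∈ stdSimplex ℝ ι := single_mem_stdSimplex ℝ _
  refine ⟨(fun _ ↦ s, fun _ _ ↦ 0), fun i ↦ ?_, by simpa using hε⟩
  exact (mem_feasibleRows_iff_exists ((hξ i).1.trans (hξ i).2)).2
    ⟨hs, fun _ ↦ ξ i, fun _ ↦ hξ i, by simp⟩

theorem exists_isMaxOn_programValue [Nonempty ι] (hab : a ≤ b) (hε : 0 ≤ ε)
    (hξ : ∀ i, ξ i ∈ Set.Icc a b) (A B : ι → ℝ) :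
    ∃ p ∈ feasiblePairs ι a b ε ξ, IsMaxOn (programValue A B ξ) (feasiblePairs ι a b ε ξ) p := by
  refine (isCompact_feasiblePairs hab).exists_isMaxOn (feasiblePairs_nonempty hε hξ) ?_
  unfold programValue rowValue
  fun_prop

variable [Nonempty ι] [NeZero N]

theorem exists_mem_feasiblePairs_programValue_eq_integral (hab : a ≤ b) (hε : 0 ≤ ε)
    (A B : ι → ℝ) {α : Measure ℝ}
    (hα : α ∈ ambiguitySet a b ε ((N : ℝ≥0∞)⁻¹ • ∑ i, Measure.dirac (ξ i))) :
    ∃ p ∈ feasiblePairs ι a b ε ξ, programValue A B ξ p = ∫ x, ⨆ k, A k * x + B k ∂α := by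
  obtain ⟨κ, hκ, rfl, hcost⟩ := (mem_ambiguitySet_empirical_iff hε).1 hα
  choose p hp hp_cost hp_value using fun i ↦
    exists_mem_feasibleRows_rowValue_eq_integral hab (hκ i) A B (ξ i)
  have hint (i : Fin N) : Integrable (fun x ↦ ⨆ k, A k * x + B k) (κ i : Measure ℝ) :=
    integrable_ciSup_affine_of_ae_mem_Icc (hκ i) A B
  refine ⟨(fun i ↦ (p i).1, fun i ↦ (p i).2), ⟨hp, le_trans ?_ hcost⟩, ?_⟩
  · gcongr with i
    exact hp_cost i
  · simp only [programValue, integral_inv_smul_sum hint, hp_value]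

theorem exists_mem_ambiguitySet_programValue_le_integral (hab : a ≤ b) (hε : 0 ≤ ε)
    (A B : ι → ℝ) {p : (Fin N → ι → ℝ) × (Fin N → ι → ℝ)} (hp : p ∈ feasiblePairs ι a b ε ξ) :
    ∃ α ∈ ambiguitySet a b ε ((N : ℝ≥0∞)⁻¹ • ∑ i, Measure.dirac (ξ i)),
      programValue A B ξ p ≤ ∫ x, ⨆ k, A k * x + B k ∂α := by
  obtain ⟨hrows, hcost⟩ := hp
  choose κ hκ hκ_cost hκ_value using fun i ↦
    exists_probabilityMeasure_of_mem_feasibleRows hab (hrows i) A B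
  have hint (i : Fin N) : Integrable (fun x ↦ ⨆ k, A k * x + B k) (κ i : Measure ℝ) :=
    integrable_ciSup_affine_of_ae_mem_Icc (hκ i) A B
  refine ⟨(N : ℝ≥0∞)⁻¹ • ∑ i, (κ i : Measure ℝ),
    (mem_ambiguitySet_empirical_iff hε).2 ⟨κ, hκ, rfl, ?_⟩, ?_⟩
  · simpa only [hκ_cost] using hcost
  · rw [programValue, integral_inv_smul_sum hint]
    gcongr with i
    exact hκ_value i

theorem isGreatest_integral_ambiguitySet (hab : a ≤ b) (hε : 0 ≤ ε) {A B : ι → ℝ}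
    {p : (Fin N → ι → ℝ) × (Fin N → ι → ℝ)} (hp : p ∈ feasiblePairs ι a b ε ξ)
    (hmax : IsMaxOn (programValue A B ξ) (feasiblePairs ι a b ε ξ) p) :
    IsGreatest ((fun α ↦ ∫ x, ⨆ k, A k * x + B k ∂α) ''
      ambiguitySet a b ε ((N : ℝ≥0∞)⁻¹ • ∑ i, Measure.dirac (ξ i))) (programValue A B ξ p) := by
  have hle {α : Measure ℝ}
      (hα : α ∈ ambiguitySet a b ε ((N : ℝ≥0∞)⁻¹ • ∑ i, Measure.dirac (ξ i))) :
      ∫ x, ⨆ k, A k * x + B k ∂α ≤ programValue A B ξ p := by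
    obtain ⟨r, hr, hr_value⟩ := exists_mem_feasiblePairs_programValue_eq_integral hab hε A B hα
    exact hr_value.symm.trans_le (hmax hr)
  obtain ⟨α, hα, hpα⟩ := exists_mem_ambiguitySet_programValue_le_integral hab hε A B hp
  exact ⟨⟨α, hα, (hle hα).antisymm hpα⟩, Set.forall_mem_image.2 fun _ ↦ hle⟩

end Program

/-- the worst-case expectation of a max-of-affine loss over the
support-constrained Wasserstein ball equals the value of a finite convex
program, and the latter supremum is attained. -/
theorem stmt2 {N K : ℕ} (hN : 1 ≤ N) (hK : 1 ≤ K)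
    (a b ε : ℝ) (hab : a ≤ b) (hε : 0 ≤ ε)
    (ξ : Fin N → ℝ) (hξ : ∀ i, ξ i ∈ Set.Icc a b)
    (A B : Fin K → ℝ)
    (ltil : ℝ → ℝ) (hltil : ∀ x, ltil x = ⨆ k, A k * x + B k)
    (αhat : Measure ℝ)
    (hαhat : αhat = (N : ℝ≥0∞)⁻¹ • ∑ i, Measure.dirac (ξ i))
    (Amb : Set (Measure ℝ))
    (hAmb : Amb = {α | IsProbabilityMeasure α ∧ α (Set.Icc a b) = 1 ∧
      ∃ γ : Measure (ℝ × ℝ), IsCoupling γ α αhat ∧ transportCost γ ≤ ENNReal.ofReal ε})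
    (Feas : (Fin N → Fin K → ℝ) → (Fin N → Fin K → ℝ) → Prop)
    (hFeas : ∀ s q, Feas s q ↔
      (∀ i k, 0 ≤ s i k) ∧ (∀ i, ∑ k, s i k = 1) ∧
      ((N : ℝ)⁻¹ * ∑ i, ∑ k, |q i k| ≤ ε) ∧
      (∀ i k, a * s i k ≤ s i k * ξ i - q i k ∧ s i k * ξ i - q i k ≤ b * s i k))
    (obj : (Fin N → Fin K → ℝ) → (Fin N → Fin K → ℝ) → ℝ)
    (hobj : ∀ s q, obj s q =
      (N : ℝ)⁻¹ * ∑ i, ∑ k, (s i k * (A k * ξ i + B k) - A k * q i k)) :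
    sSup ((fun α => ∫ x, ltil x ∂α) '' Amb)
      = sSup {v | ∃ s q, Feas s q ∧ v = obj s q} ∧
    ∃ s q, Feas s q ∧ obj s q = sSup {v | ∃ s q, Feas s q ∧ v = obj s q} := by
  have : NeZero N := NeZero.of_pos hN
  have : NeZero K := NeZero.of_pos hK
  obtain rfl : ltil = fun x ↦ ⨆ k, A k * x + B k := funext hltil
  subst hαhat hAmb
  have feas_iff (s q) : Feas s q ↔ (s, q) ∈ feasiblePairs (Fin K) a b ε ξ := by
    simp only [hFeas, feasiblePairs, feasibleRows, stdSimplex, Set.mem_ofPred_eq, Set.mem_Icc,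
      forall_and]
    tauto
  have hobj_eq (s q) : obj s q = programValue A B ξ (s, q) := hobj s q
  obtain ⟨⟨s, q⟩, hsq, hmax⟩ := exists_isMaxOn_programValue hab hε hξ A B
  have hprogram : IsGreatest {v | ∃ s q, Feas s q ∧ v = obj s q} (obj s q) := by
    refine ⟨⟨s, q, (feas_iff s q).2 hsq, rfl⟩, ?_⟩
    rintro _ ⟨s', q', hfeas, rfl⟩
    rw [hobj_eq, hobj_eq]
    exact hmax ((feas_iff s' q').1 hfeas)
  have hworst := isGreatest_integral_ambiguitySet hab hε hsq hmax
  rw [hprogram.csSup_eq]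
  exact ⟨hworst.csSup_eq.trans (hobj_eq s q).symm, s, q, (feas_iff s q).2 hsq, rfl⟩
end

section
/- Fix integers N, K ≥ 1, reals a ≤ b and ε ≥ 0, points ξ_1, …, ξ_N ∈ [a,b] with empirical measure α̂ = (1/N) Σ_{i=1}^N δ_{ξ_i}, and affine coefficients a_1, …, a_K, b_1, …, b_K ∈ ℝ; set ℓ̃(ξ) = max_{1≤k≤K} (a_k ξ + b_k). Suppose real matrices (s_{ik}), (q_{ik}) satisfy s_{ik} > 0 for all i,k, Σ_{k=1}^K s_{ik} = 1 for every i, (1/N) Σ_{i,k} |q_{ik}| ≤ ε, and a·s_{ik} ≤ s_{ik} ξ_i − q_{ik} ≤ b·s_{ik} for all i,k. Then the discrete measure α = (1/N) Σ_{i=1}^N Σ_{k=1}^K s_{ik} δ_{ξ_i − q_{ik}/s_{ik}} is a Borel probability measure with α([a,b]) = 1 that admits a coupling with α̂ of transport cost at most ε, and ∫ ℓ̃ dα ≥ (1/N) Σ_{i=1}^N Σ_{k=1}^K [ s_{ik}(a_k ξ_i + b_k) − a_k q_{ik} ]. -/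
open MeasureTheory ENNReal Real

/-!
Draw an index `i` with probability `1 / N`, then a piece `k` with probability `s i k`. Then
`ξ i - q i k / s i k` has law `α`, `ξ i` has law `α̂`, and their joint law is a coupling. Since
`s i k * |q i k / s i k| = |q i k|`, the cost is the weighted sum of the `|q i k|`. On the atom
`(i, k)` the loss is at least its `k`-th affine piece, whose integral is the objective.
-/

/-- The finitely supported measure with mass `m j` at `x j`. Masses are real so that sums and
integrals stay in `ℝ`; negative ones are truncated to `0`. -/
noncomputable def atomicMeasure {J E : Type*} [Fintype J] [MeasurableSpace E]
    (m : J → ℝ) (x : J → E) : Measure E :=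
  ∑ j, ENNReal.ofReal (m j) • Measure.dirac (x j)

section AtomicMeasure

variable {J E F : Type*} [Fintype J] [MeasurableSpace E] [MeasurableSpace F] {m : J → ℝ}

lemma atomicMeasure_apply_of_forall_mem (hm : ∀ j, 0 ≤ m j) {x : J → E} {S : Set E}
    (hx : ∀ j, 0 < m j → x j ∈ S) : atomicMeasure m x S = ENNReal.ofReal (∑ j, m j) := by
  rw [atomicMeasure, Measure.finsetSum_apply, ENNReal.ofReal_sum_of_nonneg fun j _ ↦ hm j]
  refine Finset.sum_congr rfl fun j _ ↦ ?_
  rcases (hm j).eq_or_lt with hj | hj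
  · simp [← hj]
  · simp [Measure.dirac_apply_of_mem (hx j hj)]

lemma isProbabilityMeasure_atomicMeasure (hm : ∀ j, 0 ≤ m j) (hm1 : ∑ j, m j = 1) (x : J → E) :
    IsProbabilityMeasure (atomicMeasure m x) :=
  ⟨by simp [atomicMeasure_apply_of_forall_mem hm, hm1]⟩

lemma map_atomicMeasure {f : E → F} (hf : Measurable f) (m : J → ℝ) (x : J → E) :
    (atomicMeasure m x).map f = atomicMeasure m (f ∘ x) := by
  simp [atomicMeasure, Measure.map_finset_sum' hf.aemeasurable, Measure.map_dirac' hf]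

lemma integral_atomicMeasure [MeasurableSingletonClass E] (hm : ∀ j, 0 ≤ m j) (x : J → E)
    (f : E → ℝ) : ∫ e, f e ∂atomicMeasure m x = ∑ j, m j * f (x j) := by
  have hf (j) : Integrable f (ENNReal.ofReal (m j) • Measure.dirac (x j)) :=
    (integrable_dirac enorm_lt_top).smul_measure ENNReal.ofReal_ne_top
  simp [atomicMeasure, integral_finsetSum_measure fun j _ ↦ hf j, ENNReal.toReal_ofReal (hm _)]

lemma sum_mul_le_integral_iSup_atomicMeasure [MeasurableSingletonClass E] {κ : Type*} [Finite κ]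
    (hm : ∀ j, 0 ≤ m j) (x : J → E) (f : κ → E → ℝ) (c : J → κ) :
    ∑ j, m j * f (c j) (x j) ≤ ∫ e, ⨆ k, f k e ∂atomicMeasure m x := by
  rw [integral_atomicMeasure hm]
  gcongr with j
  · exact hm j
  · exact le_ciSup (f := fun k ↦ f k (x j)) (Set.finite_range _).bddAbove (c j)

lemma isCoupling_atomicMeasure (m x y : J → ℝ) :
    IsCoupling (atomicMeasure m fun j ↦ (x j, y j)) (atomicMeasure m x) (atomicMeasure m y) :=
  ⟨map_atomicMeasure measurable_fst m _, map_atomicMeasure measurable_snd m _⟩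

lemma transportCost_atomicMeasure (hm : ∀ j, 0 ≤ m j) (x y : J → ℝ) :
    transportCost (atomicMeasure m fun j ↦ (x j, y j)) =
      ENNReal.ofReal (∑ j, m j * |x j - y j|) := by
  rw [ENNReal.ofReal_sum_of_nonneg fun j _ ↦ mul_nonneg (hm j) (abs_nonneg _)]
  simp [transportCost, atomicMeasure, ENNReal.ofReal_mul (hm _)]

lemma natCast_inv_smul_sum_dirac {N : ℕ} (hN : N ≠ 0) (x : J → E) :
    (N : ℝ≥0∞)⁻¹ • ∑ j, Measure.dirac (x j) = atomicMeasure (fun _ ↦ (N : ℝ)⁻¹) x := by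
  simp [atomicMeasure, Finset.smul_sum, ENNReal.ofReal_inv_of_pos (Nat.cast_pos.2 hN.bot_lt)]

end AtomicMeasure

/-- The mass of the piece `(i, k)` when the mixing weights `s i` split the mass `p i`. It serves
as the mass function both of the split measure and of its coupling with the unsplit one. -/
def splitMass {ι κ : Type*} (p : ι → ℝ) (s : ι → κ → ℝ) (j : ι × κ) : ℝ :=
  p j.1 * s j.1 j.2

/-- The location of the piece `(i, k)`: its mass `s i k` leaves `ξ i` carrying the total
displacement `-q i k`. If `s i k = 0` the quotient is `0`, but that piece has no mass. -/
noncomputable def displacedAtom {ι κ : Type*} (ξ : ι → ℝ) (s q : ι → κ → ℝ) (j : ι × κ) : ℝ :=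
  ξ j.1 - q j.1 j.2 / s j.1 j.2

section SplitMass

variable {ι κ E : Type*} [Fintype ι] [Fintype κ] [MeasurableSpace E] {p : ι → ℝ} {s : ι → κ → ℝ}

lemma sum_splitMass_mul (p : ι → ℝ) (s : ι → κ → ℝ) (f : ι × κ → ℝ) :
    ∑ j, splitMass p s j * f j = ∑ i, p i * ∑ k, s i k * f (i, k) := by
  simp only [Fintype.sum_prod_type, splitMass, mul_assoc, Finset.mul_sum]

lemma sum_splitMass (hs1 : ∀ i, ∑ k, s i k = 1) : ∑ j, splitMass p s j = ∑ i, p i := by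
  simpa [hs1] using sum_splitMass_mul p s fun _ ↦ 1

lemma atomicMeasure_splitMass (hp : ∀ i, 0 ≤ p i) (s : ι → κ → ℝ) (x : ι × κ → E) :
    atomicMeasure (splitMass p s) x =
      ∑ i, ENNReal.ofReal (p i) • ∑ k, ENNReal.ofReal (s i k) • Measure.dirac (x (i, k)) := by
  simp only [atomicMeasure, splitMass, Fintype.sum_prod_type, Finset.smul_sum, smul_smul,
    ENNReal.ofReal_mul (hp _)]

lemma atomicMeasure_splitMass_comp_fst (hp : ∀ i, 0 ≤ p i) (hs : ∀ i k, 0 ≤ s i k)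
    (hs1 : ∀ i, ∑ k, s i k = 1) (x : ι → E) :
    atomicMeasure (splitMass p s) (fun j ↦ x j.1) = atomicMeasure p x := by
  have hs1' (i) : ∑ k, ENNReal.ofReal (s i k) = 1 := by
    rw [← ENNReal.ofReal_sum_of_nonneg fun k _ ↦ hs i k, hs1, ENNReal.ofReal_one]
  rw [atomicMeasure_splitMass hp s fun j ↦ x j.1]
  simp only [← Finset.sum_smul, hs1', one_smul, atomicMeasure]

lemma natCast_inv_smul_sum_sum_dirac {N : ℕ} (hN : N ≠ 0) (s : ι → κ → ℝ) (x : ι × κ → E) :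
    (N : ℝ≥0∞)⁻¹ • ∑ i, ∑ k, ENNReal.ofReal (s i k) • Measure.dirac (x (i, k)) =
      atomicMeasure (splitMass (fun _ ↦ (N : ℝ)⁻¹) s) x := by
  rw [atomicMeasure_splitMass (fun _ ↦ by positivity),
    ENNReal.ofReal_inv_of_pos (Nat.cast_pos.2 hN.bot_lt), ENNReal.ofReal_natCast, Finset.smul_sum]

end SplitMass

section ScaledInterval

variable {a b s x q : ℝ}

lemma sub_div_mem_Icc (hs : 0 < s) (h : a * s ≤ s * x - q ∧ s * x - q ≤ b * s) :
    x - q / s ∈ Set.Icc a b := by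
  rw [← mul_div_cancel_left₀ x hs.ne', ← sub_div]
  exact ⟨(le_div_iff₀ hs).2 h.1, (div_le_iff₀ hs).2 h.2⟩

lemma mul_div_cancel_of_scaled_bounds (h : a * s ≤ s * x - q ∧ s * x - q ≤ b * s) :
    s * (q / s) = q :=
  mul_div_cancel_of_imp' <| by rintro rfl; exact le_antisymm (by linarith) (by linarith)

end ScaledInterval

section SplitTransport

variable {ι κ : Type*} [Fintype ι] [Fintype κ] {s q : ι → κ → ℝ}

lemma sum_splitMass_mul_abs_displacedAtom_sub (hs : ∀ i k, 0 ≤ s i k)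
    (hsq : ∀ i k, s i k * (q i k / s i k) = q i k) (p ξ : ι → ℝ) :
    ∑ j, splitMass p s j * |displacedAtom ξ s q j - ξ j.1| = ∑ i, p i * ∑ k, |q i k| := by
  have hcost (i k) : s i k * |displacedAtom ξ s q (i, k) - ξ i| = |q i k| :=
    calc s i k * |displacedAtom ξ s q (i, k) - ξ i| = |s i k * (q i k / s i k)| := by
          rw [displacedAtom, sub_sub_cancel_left, abs_neg, abs_mul, abs_of_nonneg (hs i k)]
      _ = |q i k| := by rw [hsq]
  simp only [sum_splitMass_mul, hcost]

lemma sum_splitMass_mul_affine_displacedAtom (hsq : ∀ i k, s i k * (q i k / s i k) = q i k)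
    (p ξ : ι → ℝ) (A B : κ → ℝ) :
    ∑ j, splitMass p s j * (A j.2 * displacedAtom ξ s q j + B j.2) =
      ∑ i, p i * ∑ k, (s i k * (A k * ξ i + B k) - A k * q i k) := by
  have hpiece (i k) : s i k * (A k * displacedAtom ξ s q (i, k) + B k) =
      s i k * (A k * ξ i + B k) - A k * q i k := by
    rw [displacedAtom]
    linear_combination -A k * hsq i k
  simp only [sum_splitMass_mul, hpiece]

end SplitTransport

theorem stmt3_general {ι κ : Type*} [Fintype ι] [Fintype κ] {a b ε : ℝ} {p ξ : ι → ℝ}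
    (A B : κ → ℝ) {s q : ι → κ → ℝ}
    (hp : ∀ i, 0 ≤ p i) (hp1 : ∑ i, p i = 1)
    (hs : ∀ i k, 0 ≤ s i k) (hs1 : ∀ i, ∑ k, s i k = 1)
    (hq : ∑ i, p i * ∑ k, |q i k| ≤ ε)
    (hbox : ∀ i k, a * s i k ≤ s i k * ξ i - q i k ∧ s i k * ξ i - q i k ≤ b * s i k) :
    let α := atomicMeasure (splitMass p s) (displacedAtom ξ s q)
    IsProbabilityMeasure α ∧
    α (Set.Icc a b) = 1 ∧
    (∃ γ, IsCoupling γ α (atomicMeasure p ξ) ∧ transportCost γ ≤ ENNReal.ofReal ε) ∧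
    ∑ i, p i * ∑ k, (s i k * (A k * ξ i + B k) - A k * q i k) ≤
      ∫ x, (⨆ k, A k * x + B k) ∂α := by
  have hm (j) : 0 ≤ splitMass p s j := mul_nonneg (hp j.1) (hs j.1 j.2)
  have hm1 : ∑ j, splitMass p s j = 1 := (sum_splitMass hs1).trans hp1
  have hsq (i k) : s i k * (q i k / s i k) = q i k := mul_div_cancel_of_scaled_bounds (hbox i k)
  have hmem (j) (hj : 0 < splitMass p s j) : displacedAtom ξ s q j ∈ Set.Icc a b :=
    sub_div_mem_Icc (pos_of_mul_pos_right hj (hp j.1)) (hbox j.1 j.2)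
  refine ⟨isProbabilityMeasure_atomicMeasure hm hm1 _, ?_,
    ⟨atomicMeasure (splitMass p s) fun j ↦ (displacedAtom ξ s q j, ξ j.1), ?_, ?_⟩, ?_⟩
  · rw [atomicMeasure_apply_of_forall_mem hm hmem, hm1, ENNReal.ofReal_one]
  · rw [← atomicMeasure_splitMass_comp_fst hp hs hs1]
    exact isCoupling_atomicMeasure ..
  · rw [transportCost_atomicMeasure hm, sum_splitMass_mul_abs_displacedAtom_sub hs hsq]
    exact ENNReal.ofReal_le_ofReal hq
  · rw [← sum_splitMass_mul_affine_displacedAtom hsq]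
    exact sum_mul_le_integral_iSup_atomicMeasure hm _ (fun k x ↦ A k * x + B k) Prod.snd

/-- the extremal discrete measure built from a feasible pair (s,q)
lies in the support-constrained Wasserstein ball around the empirical measure
and attains at least the convex-program objective value. -/
theorem stmt3 {N K : ℕ} (hN : 1 ≤ N) (hK : 1 ≤ K)
    (a b ε : ℝ) (hab : a ≤ b) (hε : 0 ≤ ε)
    (ξ : Fin N → ℝ) (hξ : ∀ i, ξ i ∈ Set.Icc a b)
    (A B : Fin K → ℝ)
    (s q : Fin N → Fin K → ℝ)
    (hs : ∀ i k, 0 < s i k) (hs1 : ∀ i, ∑ k, s i k = 1)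
    (hq : (N : ℝ)⁻¹ * ∑ i, ∑ k, |q i k| ≤ ε)
    (hbox : ∀ i k, a * s i k ≤ s i k * ξ i - q i k ∧ s i k * ξ i - q i k ≤ b * s i k)
    (αhat αm : Measure ℝ)
    (hαhat : αhat = (N : ℝ≥0∞)⁻¹ • ∑ i, Measure.dirac (ξ i))
    (hαm : αm = (N : ℝ≥0∞)⁻¹ •
      ∑ i, ∑ k, ENNReal.ofReal (s i k) • Measure.dirac (ξ i - q i k / s i k)) :
    IsProbabilityMeasure αm ∧
    αm (Set.Icc a b) = 1 ∧
    (∃ γ : Measure (ℝ × ℝ), IsCoupling γ αm αhat ∧ transportCost γ ≤ ENNReal.ofReal ε) ∧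
    ∫ x, (⨆ k, A k * x + B k) ∂αm ≥
      (N : ℝ)⁻¹ * ∑ i, ∑ k, (s i k * (A k * ξ i + B k) - A k * q i k) := by
  have hN0 : N ≠ 0 := Nat.one_le_iff_ne_zero.1 hN
  rw [hαm.trans (natCast_inv_smul_sum_sum_dirac hN0 s (displacedAtom ξ s q)), hαhat,
    natCast_inv_smul_sum_dirac hN0, Finset.mul_sum]
  exact stmt3_general A B (fun _ ↦ by positivity) (by simp [hN0]) (fun i k ↦ (hs i k).le) hs1
    (by rwa [← Finset.mul_sum]) hbox
end

section
/- Let ν be a Borel probability measure on ℝ with finite first moment and let ε ≥ 0. For each integer K ≥ 1 let ℓ̃_K : ℝ → ℝ be a pointwise maximum of finitely many affine functions, such that ℓ̃_K(ξ) ≤ ℓ̃_{K+1}(ξ) ≤ ℓ(ξ) for all ξ ∈ ℝ and all K, and ℓ̃_K(ξ) → ℓ(ξ) as K → ∞ for every ξ ∈ ℝ, where ℓ(ξ) = log(1+e^{-ξ}). Define v* = − sup { ∫ ℓ dα : α ∈ U_ε(ν) } and v_K = − sup { ∫ ℓ̃_K dα : α ∈ U_ε(ν) }. Then: (i) v_K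 ≥ v* for every K; (ii) v_{K+1} ≤ v_K for every K; (iii) v_K converges to v* as K → ∞. -/
open MeasureTheory ENNReal Real

/-- f is a pointwise maximum of finitely many affine functions. -/
def IsMaxOfAffine (f : ℝ → ℝ) : Prop :=
  ∃ (n : ℕ) (a b : Fin (n + 1) → ℝ), ∀ x, f x = ⨆ k, a k * x + b k

/-!
On the Wasserstein ball around a measure with finite first moment, first moments are uniformly
bounded, so every measurable loss of at most linear growth is integrable against each measure of the
ball, with expectations bounded above. The worst-case expectation is therefore monotone in the loss.
Convergence is an interchange of suprema: along an increasing sequence of losses, monotone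
convergence makes `∫ f dα` the supremum over `K` of `∫ L K dα`, and the supremum over the ball
commutes with the supremum over `K`.
-/

open Filter Asymptotics Topology

theorem bddAbove_image_of_le {β α : Type*} [Preorder α] {s : Set β} {f g : β → α}
    (hfg : ∀ b ∈ s, f b ≤ g b) (hg : BddAbove (g '' s)) : BddAbove (f '' s) := by
  obtain ⟨C, hC⟩ := hg
  exact ⟨C, Set.forall_mem_image.2 fun b hb => (hfg b hb).trans (hC ⟨b, hb, rfl⟩)⟩

section ConditionallyCompleteLattice

variable {ι β α : Type*} [ConditionallyCompleteLattice α] {s : Set β}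

theorem csSup_image_le_csSup_image {f g : β → α} (hs : s.Nonempty) (hg : BddAbove (g '' s))
    (hfg : ∀ b ∈ s, f b ≤ g b) : sSup (f '' s) ≤ sSup (g '' s) :=
  csSup_le (hs.image f) <|
    Set.forall_mem_image.2 fun b hb => (hfg b hb).trans (le_csSup hg ⟨b, hb, rfl⟩)

theorem isLUB_range_csSup_image {F : ι → β → α} {g : β → α} (hs : s.Nonempty)
    (hg : BddAbove (g '' s)) (hF : ∀ b ∈ s, IsLUB (Set.range fun i => F i b) (g b)) :
    IsLUB (Set.range fun i => sSup (F i '' s)) (sSup (g '' s)) := by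
  have hle : ∀ i, ∀ b ∈ s, F i b ≤ g b := fun i b hb => (hF b hb).1 ⟨i, rfl⟩
  refine ⟨Set.forall_mem_range.2 fun i => csSup_image_le_csSup_image hs hg (hle i), fun c hc => ?_⟩
  refine csSup_le (hs.image g) (Set.forall_mem_image.2 fun b hb => (hF b hb).2 ?_)
  refine Set.forall_mem_range.2 fun i => le_trans ?_ (hc ⟨i, rfl⟩)
  exact le_csSup (bddAbove_image_of_le (hle i) hg) ⟨b, hb, rfl⟩

end ConditionallyCompleteLattice

section WorstCase

variable {Ω : Type*} [MeasurableSpace Ω] {S : Set (Measure Ω)}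

/-- The worst-case expectation `sup { ∫ f dα : α ∈ S }` of a loss `f` over an ambiguity set `S` of
measures. Being a real supremum of Bochner integrals, it takes junk values unless `S` is nonempty,
`f` is integrable against each `α ∈ S`, and the integrals are bounded above. -/
noncomputable def worstCaseExpectation (S : Set (Measure Ω)) (f : Ω → ℝ) : ℝ :=
  sSup ((fun α => ∫ x, f x ∂α) '' S)

theorem worstCaseExpectation_mono {f g : Ω → ℝ} (hS : S.Nonempty)
    (hf : ∀ α ∈ S, Integrable f α) (hg : ∀ α ∈ S, Integrable g α)
    (hbdd : BddAbove ((fun α => ∫ x, g x ∂α) '' S)) (hfg : f ≤ g) :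
    worstCaseExpectation S f ≤ worstCaseExpectation S g :=
  csSup_image_le_csSup_image hS hbdd fun α hα => integral_mono (hf α hα) (hg α hα) hfg

theorem tendsto_worstCaseExpectation_of_monotone {F : ℕ → Ω → ℝ} {f : Ω → ℝ} (hS : S.Nonempty)
    (hF : ∀ n, ∀ α ∈ S, Integrable (F n) α) (hf : ∀ α ∈ S, Integrable f α)
    (hbdd : BddAbove ((fun α => ∫ x, f x ∂α) '' S)) (hmono : Monotone F)
    (hlim : ∀ x, Tendsto (fun n => F n x) atTop (𝓝 (f x))) :
    Tendsto (fun n => worstCaseExpectation S (F n)) atTop (𝓝 (worstCaseExpectation S f)) := by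
  have hmono_integral : ∀ α ∈ S, Monotone fun n => ∫ x, F n x ∂α :=
    fun α hα m n hmn => integral_mono (hF m α hα) (hF n α hα) (hmono hmn)
  have hlub : ∀ α ∈ S, IsLUB (Set.range fun n => ∫ x, F n x ∂α) (∫ x, f x ∂α) := fun α hα =>
    isLUB_of_tendsto_atTop (hmono_integral α hα) <|
      integral_tendsto_of_tendsto_of_monotone (fun n => hF n α hα) (hf α hα)
        (ae_of_all _ fun x _ _ hmn => hmono hmn x) (ae_of_all _ hlim)
  have hbddF : ∀ n, BddAbove ((fun α => ∫ x, F n x ∂α) '' S) := fun n =>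
    bddAbove_image_of_le (fun α hα => (hlub α hα).1 ⟨n, rfl⟩) hbdd
  have hmono_worst : Monotone fun n => worstCaseExpectation S (F n) := fun m n hmn =>
    worstCaseExpectation_mono hS (hF m) (hF n) (hbddF n) (hmono hmn)
  exact tendsto_atTop_isLUB hmono_worst (isLUB_range_csSup_image hS hbdd hlub)

end WorstCase

section LinearGrowth

theorem isBigO_of_le_of_le {X E : Type*} [Norm E] {l : Filter X} {f g h : X → ℝ} {k : X → E}
    (hf : f =O[l] k) (hh : h =O[l] k) (hfg : f ≤ᶠ[l] g) (hgh : g ≤ᶠ[l] h) : g =O[l] k := by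
  refine IsBigO.trans (IsBigO.of_norm_eventuallyLE ?_) (hf.norm_left.add hh.norm_left)
  filter_upwards [hfg, hgh] with x hfg_x hgh_x
  calc |g x| ≤ max |f x| |h x| := abs_le_max_abs_abs hfg_x hgh_x
    _ ≤ |f x| + |h x| := max_le_add_of_nonneg (abs_nonneg _) (abs_nonneg _)

theorem abs_ciSup_le_sum_abs {ι : Type*} [Fintype ι] [Nonempty ι] (u : ι → ℝ) :
    |⨆ i, u i| ≤ ∑ i, |u i| := by
  obtain ⟨i, hi⟩ := exists_eq_ciSup_of_finite (f := u)
  rw [← hi]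
  exact Finset.single_le_sum (f := fun j => |u j|) (fun j _ => abs_nonneg _) (Finset.mem_univ i)

theorem affine_isBigO_one_add_abs (a b : ℝ) :
    (fun x : ℝ => a * x + b) =O[⊤] fun x : ℝ => 1 + |x| := by
  refine isBigO_top.2 ⟨|a| + |b|, fun x => ?_⟩
  rw [Real.norm_eq_abs, Real.norm_of_nonneg (by positivity)]
  calc |a * x + b| ≤ |a| * |x| + |b| := (abs_add_le _ _).trans_eq (by rw [abs_mul])
    _ ≤ (|a| + |b|) * (1 + |x|) := by
      nlinarith [abs_nonneg a, mul_nonneg (abs_nonneg b) (abs_nonneg x)]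

theorem IsMaxOfAffine.measurable {f : ℝ → ℝ} (hf : IsMaxOfAffine f) : Measurable f := by
  obtain ⟨n, a, b, hab⟩ := hf
  rw [funext hab]
  exact Measurable.iSup fun k => by fun_prop

theorem IsMaxOfAffine.isBigO_one_add_abs {f : ℝ → ℝ} (hf : IsMaxOfAffine f) :
    f =O[⊤] fun x => 1 + |x| := by
  obtain ⟨n, a, b, hab⟩ := hf
  rw [funext hab]
  exact (IsBigO.of_norm_le fun x => abs_ciSup_le_sum_abs fun k => a k * x + b k).trans
    (IsBigO.fun_sum fun k _ => (affine_isBigO_one_add_abs (a k) (b k)).norm_left)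

theorem logisticLoss_nonneg (x : ℝ) : 0 ≤ logisticLoss x :=
  Real.log_nonneg (by linarith [Real.exp_pos (-x)])

theorem logisticLoss_le_one_add_abs (x : ℝ) : logisticLoss x ≤ 1 + |x| := by
  refine (Real.log_le_iff_le_exp (by positivity)).2 ?_
  calc 1 + Real.exp (-x) ≤ 2 * Real.exp |x| := by
        linarith [Real.one_le_exp (abs_nonneg x), Real.exp_le_exp.2 (neg_le_abs x)]
    _ ≤ Real.exp 1 * Real.exp |x| := by gcongr; linarith [Real.add_one_le_exp 1]
    _ = Real.exp (1 + |x|) := (Real.exp_add _ _).symm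

theorem logisticLoss_isBigO_one_add_abs : logisticLoss =O[⊤] fun x => 1 + |x| :=
  IsBigO.of_norm_le fun x => by
    rw [Real.norm_of_nonneg (logisticLoss_nonneg x)]
    exact logisticLoss_le_one_add_abs x

end LinearGrowth

section WassersteinBall

variable {ν α : Measure ℝ} {ε : ℝ} {f : ℝ → ℝ}

theorem self_mem_Uball (ν : Measure ℝ) [hν : IsProbabilityMeasure ν] (ε : ℝ) : ν ∈ Uball ε ν := by
  have hdiag : Measurable fun x : ℝ => (x, x) := by fun_prop
  refine ⟨hν, ν.map fun x => (x, x), ⟨?_, ?_⟩, ?_⟩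
  · exact (Measure.map_map measurable_fst hdiag).trans Measure.map_id
  · exact (Measure.map_map measurable_snd hdiag).trans Measure.map_id
  · rw [transportCost, lintegral_map (by fun_prop) hdiag]
    simp

theorem IsCoupling.lintegral_abs_le {γ : Measure (ℝ × ℝ)} {β : Measure ℝ}
    (hγ : IsCoupling γ α β) :
    ∫⁻ x, ENNReal.ofReal |x| ∂α ≤ transportCost γ + ∫⁻ x, ENNReal.ofReal |x| ∂β := by
  obtain ⟨rfl, rfl⟩ := hγ
  rw [lintegral_map (by fun_prop) measurable_fst, lintegral_map (by fun_prop) measurable_snd,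
    transportCost, ← lintegral_add_right _ (by fun_prop)]
  refine lintegral_mono fun p => ?_
  rw [← ENNReal.ofReal_add (abs_nonneg _) (abs_nonneg _)]
  exact ENNReal.ofReal_le_ofReal (by simpa using abs_add_le (p.1 - p.2) p.2)

theorem lintegral_abs_le_of_mem_Uball (hα : α ∈ Uball ε ν) :
    ∫⁻ x, ENNReal.ofReal |x| ∂α ≤ ENNReal.ofReal ε + ∫⁻ x, ENNReal.ofReal |x| ∂ν := by
  obtain ⟨_, γ, hγ, hcost⟩ := hα
  exact hγ.lintegral_abs_le.trans (by gcongr)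

theorem integrable_abs_of_mem_Uball (hν : Integrable (fun x : ℝ => |x|) ν) (hα : α ∈ Uball ε ν) :
    Integrable (fun x : ℝ => |x|) α := by
  have habs : ∀ μ : Measure ℝ, 0 ≤ᵐ[μ] fun x : ℝ => |x| := fun μ => ae_of_all _ abs_nonneg
  refine ⟨by fun_prop, (hasFiniteIntegral_iff_ofReal (habs α)).2 ?_⟩
  exact (lintegral_abs_le_of_mem_Uball hα).trans_lt <|
    ENNReal.add_lt_top.2 ⟨ENNReal.ofReal_lt_top, (hasFiniteIntegral_iff_ofReal (habs ν)).1 hν.2⟩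

theorem integral_abs_le_of_mem_Uball (hε : 0 ≤ ε) (hν : Integrable (fun x : ℝ => |x|) ν)
    (hα : α ∈ Uball ε ν) : ∫ x, |x| ∂α ≤ ε + ∫ x, |x| ∂ν := by
  have hnonneg : 0 ≤ ∫ x, |x| ∂ν := integral_nonneg fun x => abs_nonneg x
  have h := lintegral_abs_le_of_mem_Uball hα
  rwa [← ofReal_integral_eq_lintegral_ofReal (integrable_abs_of_mem_Uball hν hα)
      (ae_of_all _ abs_nonneg),
    ← ofReal_integral_eq_lintegral_ofReal hν (ae_of_all _ abs_nonneg),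
    ← ENNReal.ofReal_add hε hnonneg,
    ENNReal.ofReal_le_ofReal_iff (add_nonneg hε hnonneg)] at h

theorem integrable_one_add_abs_of_mem_Uball (hν : Integrable (fun x : ℝ => |x|) ν)
    (hα : α ∈ Uball ε ν) : Integrable (fun x : ℝ => 1 + |x|) α :=
  have := hα.1
  (integrable_const 1).add (integrable_abs_of_mem_Uball hν hα)

theorem integrable_of_isBigO_of_mem_Uball (hν : Integrable (fun x : ℝ => |x|) ν)
    (hmeas : Measurable f) (hf : f =O[⊤] fun x => 1 + |x|) (hα : α ∈ Uball ε ν) :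
    Integrable f α :=
  hf.integrable hmeas.aestronglyMeasurable (integrable_one_add_abs_of_mem_Uball hν hα)

theorem bddAbove_integral_image_Uball (hε : 0 ≤ ε) (hν : Integrable (fun x : ℝ => |x|) ν)
    (hmeas : Measurable f) (hf : f =O[⊤] fun x => 1 + |x|) :
    BddAbove ((fun α => ∫ x, f x ∂α) '' Uball ε ν) := by
  obtain ⟨C, hC, hfC⟩ := hf.exists_nonneg
  have hle : ∀ x, f x ≤ C * (1 + |x|) := fun x =>
    (le_abs_self _).trans <| (isBigOWith_top.1 hfC x).trans_eq <| by
      rw [Real.norm_of_nonneg (by positivity)]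
  refine ⟨C * (1 + (ε + ∫ x, |x| ∂ν)), Set.forall_mem_image.2 fun α hα => ?_⟩
  have := hα.1
  calc ∫ x, f x ∂α ≤ ∫ x, C * (1 + |x|) ∂α :=
        integral_mono (integrable_of_isBigO_of_mem_Uball hν hmeas hf hα)
          ((integrable_one_add_abs_of_mem_Uball hν hα).const_mul C) hle
    _ = C * (1 + ∫ x, |x| ∂α) := by
        rw [integral_const_mul, integral_add (integrable_const 1)
          (integrable_abs_of_mem_Uball hν hα), integral_const, probReal_univ, one_smul]
    _ ≤ C * (1 + (ε + ∫ x, |x| ∂ν)) := by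
        gcongr
        exact integral_abs_le_of_mem_Uball hε hν hα

theorem worstCaseExpectation_Uball_mono [IsProbabilityMeasure ν] (hε : 0 ≤ ε)
    (hν : Integrable (fun x : ℝ => |x|) ν) {g : ℝ → ℝ} (hf_meas : Measurable f)
    (hf : f =O[⊤] fun x => 1 + |x|) (hg_meas : Measurable g) (hg : g =O[⊤] fun x => 1 + |x|)
    (hfg : f ≤ g) :
    worstCaseExpectation (Uball ε ν) f ≤ worstCaseExpectation (Uball ε ν) g :=
  worstCaseExpectation_mono ⟨ν, self_mem_Uball ν ε⟩
    (fun _ => integrable_of_isBigO_of_mem_Uball hν hf_meas hf)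
    (fun _ => integrable_of_isBigO_of_mem_Uball hν hg_meas hg)
    (bddAbove_integral_image_Uball hε hν hg_meas hg) hfg

end WassersteinBall

theorem stmt4_general {ν : Measure ℝ} [IsProbabilityMeasure ν]
    (hm : Integrable (fun x : ℝ => |x|) ν) {ε : ℝ} (hε : 0 ≤ ε) {L : ℕ → ℝ → ℝ} {f : ℝ → ℝ}
    (hmeas : ∀ K, 1 ≤ K → Measurable (L K)) (hL : L 1 =O[⊤] fun x => 1 + |x|)
    (hf : f =O[⊤] fun x => 1 + |x|) (hmono : ∀ K, 1 ≤ K → ∀ x, L K x ≤ L (K + 1) x)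
    (hlim : ∀ x, Tendsto (fun K => L K x) atTop (𝓝 (f x))) :
    (∀ K, 1 ≤ K →
      -worstCaseExpectation (Uball ε ν) f ≤ -worstCaseExpectation (Uball ε ν) (L K)) ∧
    (∀ K, 1 ≤ K →
      -worstCaseExpectation (Uball ε ν) (L (K + 1)) ≤ -worstCaseExpectation (Uball ε ν) (L K)) ∧
    Tendsto (fun K => -worstCaseExpectation (Uball ε ν) (L K)) atTop
      (𝓝 (-worstCaseExpectation (Uball ε ν) f)) := by
  have hmono_succ : Monotone fun n => L (n + 1) :=
    monotone_nat_of_le_succ fun n => hmono (n + 1) n.succ_pos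
  have hlim_succ : ∀ x, Tendsto (fun n => L (n + 1) x) atTop (𝓝 (f x)) := fun x =>
    (hlim x).comp (tendsto_add_atTop_nat 1)
  have hf_meas : Measurable f := measurable_of_tendsto_metrizable
    (fun n => hmeas (n + 1) n.succ_pos) (tendsto_pi_nhds.2 hlim_succ)
  have hle : ∀ K, 1 ≤ K → L K ≤ f := fun K hK x => by
    obtain ⟨n, rfl⟩ := Nat.exists_eq_add_of_le' hK
    exact Monotone.ge_of_tendsto (fun _ _ hij => hmono_succ hij x) (hlim_succ x) n
  have hgrowth : ∀ K, 1 ≤ K → L K =O[⊤] fun x => 1 + |x| := fun K hK => by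
    obtain ⟨n, rfl⟩ := Nat.exists_eq_add_of_le' hK
    exact isBigO_of_le_of_le hL hf (.of_forall (hmono_succ n.zero_le)) (.of_forall (hle (n + 1) hK))
  refine ⟨fun K hK => neg_le_neg ?_, fun K hK => neg_le_neg ?_, ?_⟩
  · exact worstCaseExpectation_Uball_mono hε hm (hmeas K hK) (hgrowth K hK) hf_meas hf (hle K hK)
  · have hK' : 1 ≤ K + 1 := K.succ_pos
    exact worstCaseExpectation_Uball_mono hε hm (hmeas K hK) (hgrowth K hK) (hmeas _ hK')
      (hgrowth _ hK') (hmono K hK)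
  · refine ((tendsto_add_atTop_iff_nat 1).1 ?_).neg
    exact tendsto_worstCaseExpectation_of_monotone ⟨ν, self_mem_Uball ν ε⟩
      (fun n _ => integrable_of_isBigO_of_mem_Uball hm (hmeas _ n.succ_pos) (hgrowth _ n.succ_pos))
      (fun _ => integrable_of_isBigO_of_mem_Uball hm hf_meas hf)
      (bddAbove_integral_image_Uball hε hm hf_meas hf) hmono_succ hlim_succ

/-- monotone tightening of the robust value under increasing
piecewise-linear underestimators of the logistic loss. -/
theorem stmt4 (ν : Measure ℝ) (hν : IsProbabilityMeasure ν)
    (hm : Integrable (fun x : ℝ => |x|) ν)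
    (ε : ℝ) (hε : 0 ≤ ε)
    (L : ℕ → ℝ → ℝ)
    (hmax : ∀ K, 1 ≤ K → IsMaxOfAffine (L K))
    (hmono : ∀ K, 1 ≤ K → ∀ x, L K x ≤ L (K + 1) x)
    (hle : ∀ K, 1 ≤ K → ∀ x, L K x ≤ logisticLoss x)
    (hlim : ∀ x, Filter.Tendsto (fun K => L K x) Filter.atTop (nhds (logisticLoss x)))
    (vstar : ℝ)
    (hvstar : vstar = -sSup ((fun α => ∫ x, logisticLoss x ∂α) '' Uball ε ν))
    (v : ℕ → ℝ)
    (hv : ∀ K, v K = -sSup ((fun α => ∫ x, L K x ∂α) '' Uball ε ν)) :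
    (∀ K, 1 ≤ K → vstar ≤ v K) ∧
    (∀ K, 1 ≤ K → v (K + 1) ≤ v K) ∧
    Filter.Tendsto v Filter.atTop (nhds vstar) := by
  obtain rfl : v = _ := funext hv
  exact hvstar ▸ stmt4_general hm hε (fun K hK => (hmax K hK).measurable)
    (hmax 1 le_rfl).isBigO_one_add_abs logisticLoss_isBigO_one_add_abs hmono hlim
end

section
/- Let ν be a Borel probability measure on ℝ with finite first moment, let ε ≥ 0, and set S = U_ε(ν). Let T ⊆ S be nonempty, and let d ≥ 0 be such that every α ∈ S admits some α' ∈ T and a coupling of α and α' with transport cost at most d. Then 0 ≤ inf_{α∈T} ∫ log σ dα − inf_{α∈S} ∫ log σ dα ≤ d. -/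
open MeasureTheory ENNReal Real

open scoped NNReal

/-
For a `K`-Lipschitz `f`, the integral `∫ f` is `K`-Lipschitz for the 1-Wasserstein distance: against
a coupling `γ` of `α` and `β`, `∫ f ∂α - ∫ f ∂β = ∫ (f x - f y) ∂γ`, which is at most `K` times the
transport cost. Hence `∫ f` is bounded on a Wasserstein ball, and replacing each `α ∈ S` by a point
of `T` within distance `d` raises the infimum by at most `K * d`. Finally `log σ` is 1-Lipschitz, as
its derivative is `1 - σ ∈ (0, 1)`.
-/

section Infimum

variable {ι G : Type*} [ConditionallyCompleteLattice G] [AddCommGroup G] [IsOrderedAddMonoid G]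

lemma csInf_image_le_csInf_image_add {g : ι → G} {S T : Set ι} {c : G} (hS : S.Nonempty)
    (hT : BddBelow (g '' T)) (h : ∀ a ∈ S, ∃ b ∈ T, g b ≤ g a + c) :
    sInf (g '' T) ≤ sInf (g '' S) + c := by
  rw [← sub_le_iff_le_add]
  refine le_csInf (hS.image g) (Set.forall_mem_image.2 fun a ha ↦ ?_)
  obtain ⟨b, hb, hba⟩ := h a ha
  exact sub_le_iff_le_add.2 ((csInf_le hT (Set.mem_image_of_mem g hb)).trans hba)

end Infimum

section Lipschitz

variable {X E : Type*} [MeasurableSpace X] [NormedAddCommGroup E] {f : X → E} {K : ℝ≥0}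

lemma lintegral_enorm_fst_sub_snd_le_of_lipschitzWith [PseudoEMetricSpace X]
    (hf : LipschitzWith K f) (γ : Measure (X × X)) :
    ∫⁻ p, ‖f p.1 - f p.2‖ₑ ∂γ ≤ K * ∫⁻ p, edist p.1 p.2 ∂γ :=
  calc ∫⁻ p, ‖f p.1 - f p.2‖ₑ ∂γ ≤ ∫⁻ p, K * edist p.1 p.2 ∂γ :=
        lintegral_mono fun p ↦ by simpa only [edist_eq_enorm_sub] using hf p.1 p.2
    _ = K * ∫⁻ p, edist p.1 p.2 ∂γ := lintegral_const_mul' _ _ coe_ne_top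

lemma integrable_of_lipschitzWith_of_integrable_dist [PseudoMetricSpace X]
    [OpensMeasurableSpace X] [SecondCountableTopologyEither X E] (hf : LipschitzWith K f)
    {μ : Measure X} [IsFiniteMeasure μ] {x₀ : X} (hμ : Integrable (fun x ↦ dist x x₀) μ) :
    Integrable f μ := by
  refine ((hμ.const_mul (K : ℝ)).add (integrable_const ‖f x₀‖)).mono'
    hf.continuous.aestronglyMeasurable (.of_forall fun x ↦ ?_)
  calc ‖f x‖ ≤ ‖f x - f x₀‖ + ‖f x₀‖ := norm_le_norm_sub_add _ _
    _ ≤ K * dist x x₀ + ‖f x₀‖ := by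
      gcongr
      simpa only [dist_eq_norm] using hf.dist_le_mul x x₀

end Lipschitz

section Coupling

variable {X : Type*} [PseudoEMetricSpace X] [MeasurableSpace X]

/-- `α` and `β` admit a coupling of transport cost at most `c`: the relation "at 1-Wasserstein
distance at most `c`" on an arbitrary space, with the infimum over couplings replaced by the
existence of one of cost at most `c`. -/
def CoupledWithin (c : ℝ≥0∞) (α β : Measure X) : Prop :=
  ∃ γ : Measure (X × X), γ.map Prod.fst = α ∧ γ.map Prod.snd = β ∧ ∫⁻ p, edist p.1 p.2 ∂γ ≤ c

namespace CoupledWithin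

variable [OpensMeasurableSpace X] {E : Type*} [NormedAddCommGroup E]
  [SecondCountableTopologyEither X E] {f : X → E} {K : ℝ≥0} {α β : Measure X}

lemma integrable {c : ℝ≥0∞} (h : CoupledWithin c α β) (hc : c ≠ ∞) (hf : LipschitzWith K f)
    (hβ : Integrable f β) : Integrable f α := by
  obtain ⟨γ, rfl, rfl, hγ⟩ := h
  have hf_meas : StronglyMeasurable f := hf.continuous.stronglyMeasurable
  have h_snd : Integrable (fun p : X × X ↦ f p.2) γ := hβ.comp_measurable measurable_snd
  have h_sub : Integrable (fun p : X × X ↦ f p.1 - f p.2) γ := by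
    refine ⟨((hf_meas.comp_measurable measurable_fst).sub
      (hf_meas.comp_measurable measurable_snd)).aestronglyMeasurable, ?_⟩
    calc ∫⁻ p, ‖f p.1 - f p.2‖ₑ ∂γ ≤ K * ∫⁻ p, edist p.1 p.2 ∂γ :=
          lintegral_enorm_fst_sub_snd_le_of_lipschitzWith hf γ
      _ < ∞ := mul_lt_top coe_lt_top (hγ.trans_lt hc.lt_top)
  have h_fst : Integrable (fun p : X × X ↦ f p.1) γ := by
    simpa only [Pi.add_def, sub_add_cancel] using h_sub.add h_snd
  exact (integrable_map_measure hf_meas.aestronglyMeasurable measurable_fst.aemeasurable).2 h_fst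

variable [NormedSpace ℝ E]

lemma edist_integral_le {c : ℝ≥0∞} (h : CoupledWithin c α β) (hf : LipschitzWith K f)
    (hα : Integrable f α) (hβ : Integrable f β) :
    edist (∫ x, f x ∂α) (∫ x, f x ∂β) ≤ K * c := by
  obtain ⟨γ, rfl, rfl, hγ⟩ := h
  have hf_meas : StronglyMeasurable f := hf.continuous.stronglyMeasurable
  have h_fst : Integrable (fun p : X × X ↦ f p.1) γ := hα.comp_measurable measurable_fst
  have h_snd : Integrable (fun p : X × X ↦ f p.2) γ := hβ.comp_measurable measurable_snd
  calc edist (∫ x, f x ∂γ.map Prod.fst) (∫ x, f x ∂γ.map Prod.snd)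
      = ‖∫ p, (f p.1 - f p.2) ∂γ‖ₑ := by
        rw [integral_map measurable_fst.aemeasurable hf_meas.aestronglyMeasurable,
          integral_map measurable_snd.aemeasurable hf_meas.aestronglyMeasurable,
          edist_eq_enorm_sub, integral_sub h_fst h_snd]
    _ ≤ ∫⁻ p, ‖f p.1 - f p.2‖ₑ ∂γ := enorm_integral_le_lintegral_enorm _
    _ ≤ K * ∫⁻ p, edist p.1 p.2 ∂γ := lintegral_enorm_fst_sub_snd_le_of_lipschitzWith hf γ
    _ ≤ K * c := by gcongr

lemma dist_integral_le {c : ℝ≥0} (h : CoupledWithin c α β) (hf : LipschitzWith K f)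
    (hβ : Integrable f β) : dist (∫ x, f x ∂α) (∫ x, f x ∂β) ≤ K * c := by
  have h_edist := h.edist_integral_le hf (h.integrable coe_ne_top hf hβ) hβ
  rw [edist_nndist] at h_edist
  exact_mod_cast h_edist

end CoupledWithin

lemma bddBelow_image_integral_of_coupledWithin [OpensMeasurableSpace X] {f : X → ℝ} {K ε : ℝ≥0}
    (hf : LipschitzWith K f) {ν : Measure X} (hν : Integrable f ν) {S : Set (Measure X)}
    (hS : ∀ α ∈ S, CoupledWithin ε α ν) : BddBelow ((fun α ↦ ∫ x, f x ∂α) '' S) := by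
  refine ⟨∫ x, f x ∂ν - K * ε, Set.forall_mem_image.2 fun α hα ↦ ?_⟩
  have h_dist := (hS α hα).dist_integral_le hf hν
  linarith [neg_le_of_abs_le h_dist]

theorem stmt6_general [OpensMeasurableSpace X] {f : X → ℝ} {K ε d : ℝ≥0} (hf : LipschitzWith K f)
    {ν : Measure X} (hν : Integrable f ν) {S T : Set (Measure X)}
    (hS : ∀ α ∈ S, CoupledWithin ε α ν) (hTS : T ⊆ S) (hT : T.Nonempty)
    (hST : ∀ α ∈ S, ∃ β ∈ T, CoupledWithin d α β) :
    0 ≤ sInf ((fun α ↦ ∫ x, f x ∂α) '' T) - sInf ((fun α ↦ ∫ x, f x ∂α) '' S) ∧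
      sInf ((fun α ↦ ∫ x, f x ∂α) '' T) - sInf ((fun α ↦ ∫ x, f x ∂α) '' S) ≤ K * d := by
  have h_bdd := bddBelow_image_integral_of_coupledWithin hf hν hS
  have h_sub := Set.image_mono (f := fun α ↦ ∫ x, f x ∂α) hTS
  refine ⟨sub_nonneg.2 (csInf_le_csInf h_bdd (hT.image _) h_sub), sub_le_iff_le_add'.2 ?_⟩
  refine csInf_image_le_csInf_image_add (hT.mono hTS) (h_bdd.mono h_sub) fun α hα ↦ ?_
  obtain ⟨β, hβ, hαβ⟩ := hST α hα
  have hβ_int : Integrable f β := (hS β (hTS hβ)).integrable coe_ne_top hf hν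
  have h_dist := hαβ.dist_integral_le hf hβ_int
  exact ⟨β, hβ, by linarith [neg_le_of_abs_le h_dist]⟩

end Coupling

lemma coupledWithin_iff_exists_isCoupling {c : ℝ≥0∞} {α β : Measure ℝ} :
    CoupledWithin c α β ↔ ∃ γ, IsCoupling γ α β ∧ transportCost γ ≤ c := by
  simp only [CoupledWithin, IsCoupling, transportCost, edist_dist, Real.dist_eq, and_assoc]

lemma logisticSigma_eq_sigmoid : logisticSigma = sigmoid :=
  funext fun _ ↦ one_div _

lemma hasDerivAt_log_sigmoid (x : ℝ) :
    HasDerivAt (fun y ↦ Real.log (sigmoid y)) (1 - sigmoid x) x := by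
  convert (hasDerivAt_sigmoid x).log (sigmoid_pos x).ne' using 1
  rw [mul_div_cancel_left₀ _ (sigmoid_pos x).ne']

lemma lipschitzWith_log_logisticSigma :
    LipschitzWith 1 fun x ↦ Real.log (logisticSigma x) := by
  rw [logisticSigma_eq_sigmoid]
  refine lipschitzWith_of_nnnorm_deriv_le
    (fun x ↦ (hasDerivAt_log_sigmoid x).differentiableAt) fun x ↦ ?_
  rw [(hasDerivAt_log_sigmoid x).deriv, ← NNReal.coe_le_coe, coe_nnnorm, NNReal.coe_one,
    Real.norm_of_nonneg (sub_nonneg.2 (sigmoid_le_one x))]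
  exact sub_le_self 1 (sigmoid_nonneg x)

/-- error bound from restricting the follower's ambiguity set
(grouping), with d the directed Hausdorff distance from S to T. -/
theorem stmt6 (ν : Measure ℝ) (hν : IsProbabilityMeasure ν)
    (hm : Integrable (fun x : ℝ => |x|) ν)
    (ε : ℝ) (hε : 0 ≤ ε)
    (T : Set (Measure ℝ)) (hTS : T ⊆ Uball ε ν) (hTne : T.Nonempty)
    (d : ℝ) (hd : 0 ≤ d)
    (happ : ∀ α ∈ Uball ε ν, ∃ α' ∈ T, ∃ γ : Measure (ℝ × ℝ),
      IsCoupling γ α α' ∧ transportCost γ ≤ ENNReal.ofReal d) :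
    0 ≤ sInf ((fun α => ∫ x, Real.log (logisticSigma x) ∂α) '' T) -
        sInf ((fun α => ∫ x, Real.log (logisticSigma x) ∂α) '' Uball ε ν) ∧
    sInf ((fun α => ∫ x, Real.log (logisticSigma x) ∂α) '' T) -
        sInf ((fun α => ∫ x, Real.log (logisticSigma x) ∂α) '' Uball ε ν) ≤ d := by
  have h_int : Integrable (fun x ↦ Real.log (logisticSigma x)) ν :=
    integrable_of_lipschitzWith_of_integrable_dist lipschitzWith_log_logisticSigma (x₀ := 0)
      (by simpa only [Real.dist_0_eq_abs] using hm)
  simpa only [NNReal.coe_one, one_mul, Real.coe_toNNReal d hd] using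
    stmt6_general (d := d.toNNReal) lipschitzWith_log_logisticSigma h_int
      (fun _ hα ↦ coupledWithin_iff_exists_isCoupling.2 hα.2) hTS hTne
      fun α hα ↦ (happ α hα).imp fun _ h ↦ ⟨h.1, coupledWithin_iff_exists_isCoupling.2 h.2⟩
end

section
/- Let ν be a Borel probability measure on ℝ with finite first moment, let ε ≥ 0, and set S = U_ε(ν). Let T ⊆ S be nonempty, and let d ≥ 0 be such that every α ∈ S admits some α' ∈ T and a coupling of α and α' with transport cost at most d. Let ℓ̃(ξ) = max_{1≤k≤K} (a_k ξ + b_k) with |a_k| ≤ 1 for all k (so ℓ̃ is 1-Lipschitz), ℓ̃(ξ) ≤ ℓ(ξ) for all ξ where ℓ(ξ) = log(1+e^{-ξ}), and let Δ ≥ 0 satisfy ℓ(ξ) − ℓ̃(ξ) ≤ Δ for all ξ. Set m = − sup_{α∈S} ∫ ℓ dα and m̃ = − sup_{α∈T} ∫ ℓ̃ dα, and let η ≥ 0 and v ∈ ℝ satisfy m̃ ≤ v ≤ m̃ + η. Then 0 ≤ v − m ≤ Δ + d + η. -/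
open MeasureTheory ENNReal Real

/-!
A coupling of `α` and `β` of cost at most `c` moves the integral of an `L`-Lipschitz function by at
most `L * c`, and it transfers integrability of that function from `β` to `α`. So over a subset `S`
of a Wasserstein ball the integrals of an `L`-Lipschitz surrogate `f` are uniformly bounded, and if
every element of `S` is within `d` of `T ⊆ S` and `f ≤ g ≤ f + Δ`, the worst-case risks satisfy
`sup_T f ≤ sup_S g ≤ sup_S f + Δ ≤ sup_T f + L * d + Δ`.
-/

open scoped NNReal

lemma csSup_image_le_csSup_image_add {ι κ : Type*} {s : Set ι} {t : Set κ} {F : ι → ℝ} {G : κ → ℝ}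
    {c : ℝ} (hs : s.Nonempty) (hG : BddAbove (G '' t)) (h : ∀ i ∈ s, ∃ j ∈ t, F i ≤ G j + c) :
    sSup (F '' s) ≤ sSup (G '' t) + c := by
  refine csSup_le (hs.image F) (Set.forall_mem_image.2 fun i hi => ?_)
  obtain ⟨j, hj, hij⟩ := h i hi
  exact hij.trans (add_le_add_left (le_csSup hG (Set.mem_image_of_mem G hj)) c)

lemma lipschitzWith_ciSup {ι X : Type*} [Nonempty ι] [PseudoMetricSpace X] {L : ℝ≥0}
    {F : ι → X → ℝ} (hF : ∀ i, LipschitzWith L (F i))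
    (hbdd : ∀ x, BddAbove (Set.range fun i => F i x)) :
    LipschitzWith L fun x => ⨆ i, F i x :=
  .of_le_add_mul L fun x y => ciSup_le fun i =>
    ((hF i).le_add_mul x y).trans (add_le_add_left (le_ciSup (hbdd y) i) _)

lemma lipschitzWith_ciSup_mul_add {ι : Type*} [Finite ι] [Nonempty ι] {L : ℝ≥0} {A : ι → ℝ}
    (hA : ∀ k, |A k| ≤ L) (B : ι → ℝ) : LipschitzWith L fun x : ℝ => ⨆ k, A k * x + B k := by
  refine lipschitzWith_ciSup (fun k => .of_dist_le_mul fun x y => ?_)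
    fun x => (Set.finite_range _).bddAbove
  rw [dist_add_right, Real.dist_eq, Real.dist_eq, ← mul_sub, abs_mul]
  exact mul_le_mul_of_nonneg_right (hA k) (abs_nonneg _)

lemma integrable_of_lipschitzWith {X E : Type*} [PseudoMetricSpace X] [MeasurableSpace X]
    [OpensMeasurableSpace X] [NormedAddCommGroup E] [SecondCountableTopologyEither X E]
    {μ : Measure X} [IsFiniteMeasure μ] {L : ℝ≥0} {f : X → E} (hf : LipschitzWith L f) {x₀ : X}
    (hμ : Integrable (fun x => dist x x₀) μ) : Integrable f μ := by
  refine ((integrable_const ‖f x₀‖).add (hμ.const_mul L)).mono'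
    hf.continuous.aestronglyMeasurable (.of_forall fun x => ?_)
  calc ‖f x‖ ≤ ‖f x₀‖ + ‖f x - f x₀‖ := norm_le_norm_add_norm_sub' _ _
    _ ≤ ‖f x₀‖ + L * dist x x₀ := by
      rw [← dist_eq_norm]
      exact add_le_add_right (hf.dist_le_mul x x₀) _

lemma measurable_logisticLoss : Measurable logisticLoss := by
  unfold logisticLoss
  fun_prop

section WorstCaseRisk

variable {X : Type*} [MeasurableSpace X] {S T : Set (Measure X)} {f g : X → ℝ} {Δ : ℝ}

/-- The worst-case expectation of `f` over the ambiguity set `S`. The supremum is the real one, so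
it is meaningful only if `S` is nonempty and the expectations are bounded above. -/
noncomputable def worstCaseRisk (S : Set (Measure X)) (f : X → ℝ) : ℝ :=
  sSup ((fun α => ∫ x, f x ∂α) '' S)

lemma worstCaseRisk_mono (hT : T.Nonempty) (hTS : T ⊆ S)
    (hbdd : BddAbove ((fun α => ∫ x, g x ∂α) '' S)) (hf : ∀ α ∈ T, Integrable f α)
    (hg : ∀ α ∈ T, Integrable g α) (hfg : ∀ x, f x ≤ g x) :
    worstCaseRisk T f ≤ worstCaseRisk S g :=
  csSup_le (hT.image _) (Set.forall_mem_image.2 fun α hα =>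
    (integral_mono (hf α hα) (hg α hα) hfg).trans
      (le_csSup hbdd (Set.mem_image_of_mem _ (hTS hα))))

lemma integral_le_integral_add_const {μ : Measure X} [IsProbabilityMeasure μ]
    (hf : Integrable f μ) (hg : Integrable g μ) (hΔ : ∀ x, g x ≤ f x + Δ) :
    ∫ x, g x ∂μ ≤ ∫ x, f x ∂μ + Δ :=
  calc ∫ x, g x ∂μ ≤ ∫ x, (f x + Δ) ∂μ := integral_mono hg (hf.add (integrable_const Δ)) hΔ
    _ = ∫ x, f x ∂μ + Δ := by
      rw [integral_add hf (integrable_const Δ), integral_const, probReal_univ, one_smul]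

lemma worstCaseRisk_le_add_const (hS : S.Nonempty) (hprob : ∀ α ∈ S, IsProbabilityMeasure α)
    (hbdd : BddAbove ((fun α => ∫ x, f x ∂α) '' S)) (hf : ∀ α ∈ S, Integrable f α)
    (hg : ∀ α ∈ S, Integrable g α) (hΔ : ∀ x, g x ≤ f x + Δ) :
    worstCaseRisk S g ≤ worstCaseRisk S f + Δ :=
  csSup_image_le_csSup_image_add hS hbdd fun α hα =>
    have := hprob α hα
    ⟨α, hα, integral_le_integral_add_const (hf α hα) (hg α hα) hΔ⟩

lemma bddAbove_integral_of_le_add_const (hprob : ∀ α ∈ S, IsProbabilityMeasure α)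
    (hbdd : BddAbove ((fun α => ∫ x, f x ∂α) '' S)) (hf : ∀ α ∈ S, Integrable f α)
    (hg : ∀ α ∈ S, Integrable g α) (hΔ : ∀ x, g x ≤ f x + Δ) :
    BddAbove ((fun α => ∫ x, g x ∂α) '' S) := by
  obtain ⟨M, hM⟩ := hbdd
  refine ⟨M + Δ, Set.forall_mem_image.2 fun α hα => ?_⟩
  have := hprob α hα
  exact (integral_le_integral_add_const (hf α hα) (hg α hα) hΔ).trans
    (add_le_add_left (hM (Set.mem_image_of_mem _ hα)) Δ)

end WorstCaseRisk

section Transport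

variable {X : Type*} [PseudoEMetricSpace X] [MeasurableSpace X]

/-- `α` and `β` are at 1-Wasserstein distance at most `c`, witnessed by a coupling. The notion makes
sense for measures on any extended pseudometric space, whereas `IsCoupling` and `transportCost`
are specific to `ℝ`. -/
def HasCouplingWithin (c : ℝ≥0) (α β : Measure X) : Prop :=
  ∃ γ : Measure (X × X), γ.map Prod.fst = α ∧ γ.map Prod.snd = β ∧ ∫⁻ p, edist p.1 p.2 ∂γ ≤ c

lemma lintegral_enorm_sub_le_of_lipschitzWith {E : Type*} [NormedAddCommGroup E]
    {γ : Measure (X × X)} {f : X → E} {L : ℝ≥0} {c : ℝ≥0∞} (hf : LipschitzWith L f)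
    (hγ : ∫⁻ p, edist p.1 p.2 ∂γ ≤ c) :
    ∫⁻ p, ‖f p.1 - f p.2‖ₑ ∂γ ≤ L * c :=
  calc ∫⁻ p, ‖f p.1 - f p.2‖ₑ ∂γ ≤ ∫⁻ p, L * edist p.1 p.2 ∂γ :=
        lintegral_mono fun p => by
          rw [← edist_eq_enorm_sub]
          exact hf.edist_le_mul p.1 p.2
    _ = L * ∫⁻ p, edist p.1 p.2 ∂γ := lintegral_const_mul' _ _ ENNReal.coe_ne_top
    _ ≤ L * c := mul_le_mul_right hγ _

namespace HasCouplingWithin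

variable {α β : Measure X} {c L : ℝ≥0}

lemma isProbabilityMeasure [IsProbabilityMeasure β] (h : HasCouplingWithin c α β) :
    IsProbabilityMeasure α := by
  obtain ⟨γ, rfl, rfl, -⟩ := h
  have : IsProbabilityMeasure γ := Measure.isProbabilityMeasure_of_map Prod.snd
  exact Measure.isProbabilityMeasure_map measurable_fst.aemeasurable

variable [OpensMeasurableSpace X]

lemma integrable {E : Type*} [NormedAddCommGroup E] [SecondCountableTopologyEither X E]
    {f : X → E} (h : HasCouplingWithin c α β) (hf : LipschitzWith L f) (hβ : Integrable f β) :
    Integrable f α := by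
  obtain ⟨γ, rfl, rfl, hγ⟩ := h
  have hm : StronglyMeasurable f := hf.continuous.stronglyMeasurable
  have hdiff : Integrable (fun p : X × X => f p.1 - f p.2) γ :=
    ⟨((hm.comp_measurable measurable_fst).sub
        (hm.comp_measurable measurable_snd)).aestronglyMeasurable,
      (lintegral_enorm_sub_le_of_lipschitzWith hf hγ).trans_lt
        (ENNReal.mul_lt_top ENNReal.coe_lt_top ENNReal.coe_lt_top)⟩
  rw [integrable_map_measure hm.aestronglyMeasurable measurable_fst.aemeasurable]
  exact (hdiff.add (hβ.comp_measurable measurable_snd)).congr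
    (.of_forall fun p => sub_add_cancel (f p.1) (f p.2))

lemma norm_integral_sub_integral_le {E : Type*} [NormedAddCommGroup E] [NormedSpace ℝ E]
    [SecondCountableTopologyEither X E] {f : X → E} (h : HasCouplingWithin c α β)
    (hf : LipschitzWith L f) (hβ : Integrable f β) :
    ‖∫ x, f x ∂α - ∫ x, f x ∂β‖ ≤ L * c := by
  have hα : Integrable f α := h.integrable hf hβ
  obtain ⟨γ, rfl, rfl, hγ⟩ := h
  rw [integral_map measurable_fst.aemeasurable hα.aestronglyMeasurable,
    integral_map measurable_snd.aemeasurable hβ.aestronglyMeasurable]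
  have hsub : ∫ p, f p.1 ∂γ - ∫ p, f p.2 ∂γ = ∫ p, (f p.1 - f p.2) ∂γ :=
    (integral_sub (hα.comp_measurable measurable_fst) (hβ.comp_measurable measurable_snd)).symm
  have hle : ‖∫ p, (f p.1 - f p.2) ∂γ‖ₑ ≤ ((L * c : ℝ≥0) : ℝ≥0∞) := by
    rw [ENNReal.coe_mul]
    exact (enorm_integral_le_lintegral_enorm _).trans
      (lintegral_enorm_sub_le_of_lipschitzWith hf hγ)
  rw [hsub]
  exact_mod_cast enorm_le_coe.1 hle

lemma integral_le_integral_add {f : X → ℝ} (h : HasCouplingWithin c α β) (hf : LipschitzWith L f)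
    (hβ : Integrable f β) : ∫ x, f x ∂α ≤ ∫ x, f x ∂β + L * c :=
  sub_le_iff_le_add'.1 ((le_abs_self _).trans (h.norm_integral_sub_integral_le hf hβ))

lemma bddAbove_integral {ν : Measure X} {S : Set (Measure X)} {f : X → ℝ}
    (hS : ∀ α ∈ S, HasCouplingWithin c α ν) (hf : LipschitzWith L f) (hν : Integrable f ν) :
    BddAbove ((fun α => ∫ x, f x ∂α) '' S) :=
  ⟨∫ x, f x ∂ν + L * c, Set.forall_mem_image.2 fun α hα => (hS α hα).integral_le_integral_add hf hν⟩

lemma worstCaseRisk_le_add {S T : Set (Measure X)} {f : X → ℝ} (hS : S.Nonempty)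
    (hST : ∀ α ∈ S, ∃ α' ∈ T, HasCouplingWithin c α α') (hf : LipschitzWith L f)
    (hT : ∀ α' ∈ T, Integrable f α') (hbdd : BddAbove ((fun α => ∫ x, f x ∂α) '' T)) :
    worstCaseRisk S f ≤ worstCaseRisk T f + L * c :=
  csSup_image_le_csSup_image_add hS hbdd fun α hα =>
    let ⟨α', hα', h⟩ := hST α hα
    ⟨α', hα', h.integral_le_integral_add hf (hT α' hα')⟩

end HasCouplingWithin

theorem stmt7_general [OpensMeasurableSpace X] {ν : Measure X} [IsProbabilityMeasure ν]
    {S T : Set (Measure X)} {r d : ℝ≥0} (hS : ∀ α ∈ S, HasCouplingWithin r α ν)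
    (hTS : T ⊆ S) (hT : T.Nonempty) (hST : ∀ α ∈ S, ∃ α' ∈ T, HasCouplingWithin d α α')
    {L : ℝ≥0} {f g : X → ℝ} (hf : LipschitzWith L f) (hfν : Integrable f ν) (hg : Measurable g)
    (hfg : ∀ x, f x ≤ g x) {Δ : ℝ} (hΔ : ∀ x, g x - f x ≤ Δ)
    {m mt : ℝ} (hm : m = -worstCaseRisk S g) (hmt : mt = -worstCaseRisk T f)
    {η v : ℝ} (hv₁ : mt ≤ v) (hv₂ : v ≤ mt + η) :
    0 ≤ v - m ∧ v - m ≤ Δ + L * d + η := by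
  have hgf (x) : g x ≤ f x + Δ := sub_le_iff_le_add'.1 (hΔ x)
  have hprob (α) (hα : α ∈ S) : IsProbabilityMeasure α := (hS α hα).isProbabilityMeasure
  have hfS (α) (hα : α ∈ S) : Integrable f α := (hS α hα).integrable hf hfν
  have hgS (α) (hα : α ∈ S) : Integrable g α :=
    have := hprob α hα
    integrable_of_le_of_le hg.aestronglyMeasurable (.of_forall hfg) (.of_forall hgf) (hfS α hα)
      ((hfS α hα).add (integrable_const Δ))
  have hfbdd := HasCouplingWithin.bddAbove_integral hS hf hfν
  have hgbdd := bddAbove_integral_of_le_add_const hprob hfbdd hfS hgS hgf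
  have hlower : worstCaseRisk T f ≤ worstCaseRisk S g :=
    worstCaseRisk_mono hT hTS hgbdd (fun α hα => hfS α (hTS hα)) (fun α hα => hgS α (hTS hα)) hfg
  have hloss : worstCaseRisk S g ≤ worstCaseRisk S f + Δ :=
    worstCaseRisk_le_add_const (hT.mono hTS) hprob hfbdd hfS hgS hgf
  have hrestrict : worstCaseRisk S f ≤ worstCaseRisk T f + L * d :=
    HasCouplingWithin.worstCaseRisk_le_add (hT.mono hTS) hST hf (fun α hα => hfS α (hTS hα))
      (hfbdd.mono (Set.image_mono hTS))
  constructor <;> linarith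

end Transport

lemma transportCost_eq_lintegral_edist (γ : Measure (ℝ × ℝ)) :
    transportCost γ = ∫⁻ p, edist p.1 p.2 ∂γ := by
  simp only [transportCost, edist_dist, Real.dist_eq]

lemma hasCouplingWithin_toNNReal_iff {α β : Measure ℝ} {c : ℝ} :
    HasCouplingWithin c.toNNReal α β ↔
      ∃ γ : Measure (ℝ × ℝ), IsCoupling γ α β ∧ transportCost γ ≤ ENNReal.ofReal c := by
  simp only [HasCouplingWithin, IsCoupling, transportCost_eq_lintegral_edist, and_assoc,
    ENNReal.ofReal]

/-- cumulative approximation bound combining piecewise-linear loss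
error Δ, grouping restriction error d, and inner-solver tolerance η. -/
theorem stmt7 (ν : Measure ℝ) (hν : IsProbabilityMeasure ν)
    (hmom : Integrable (fun x : ℝ => |x|) ν)
    (ε : ℝ) (hε : 0 ≤ ε)
    (T : Set (Measure ℝ)) (hTS : T ⊆ Uball ε ν) (hTne : T.Nonempty)
    (d : ℝ) (hd : 0 ≤ d)
    (happ : ∀ α ∈ Uball ε ν, ∃ α' ∈ T, ∃ γ : Measure (ℝ × ℝ),
      IsCoupling γ α α' ∧ transportCost γ ≤ ENNReal.ofReal d)
    {K : ℕ} (hK : 1 ≤ K) (A B : Fin K → ℝ) (hA : ∀ k, |A k| ≤ 1)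
    (lt : ℝ → ℝ) (hlt : ∀ x, lt x = ⨆ k, A k * x + B k)
    (hle : ∀ x, lt x ≤ logisticLoss x)
    (Δ : ℝ) (hΔ0 : 0 ≤ Δ) (hΔ : ∀ x, logisticLoss x - lt x ≤ Δ)
    (m mt : ℝ)
    (hmval : m = -sSup ((fun α => ∫ x, logisticLoss x ∂α) '' Uball ε ν))
    (hmtval : mt = -sSup ((fun α => ∫ x, lt x ∂α) '' T))
    (η : ℝ) (hη : 0 ≤ η) (v : ℝ) (hv1 : mt ≤ v) (hv2 : v ≤ mt + η) :
    0 ≤ v - m ∧ v - m ≤ Δ + d + η := by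
  have : Nonempty (Fin K) := ⟨⟨0, hK⟩⟩
  have hlip : LipschitzWith 1 lt := funext hlt ▸ lipschitzWith_ciSup_mul_add hA B
  have hint : Integrable lt ν :=
    integrable_of_lipschitzWith (x₀ := 0) hlip (by simpa only [dist_zero_right, norm_eq_abs])
  simpa only [NNReal.coe_one, one_mul, Real.coe_toNNReal d hd] using
    stmt7_general (d := d.toNNReal) (fun _ hα => hasCouplingWithin_toNNReal_iff.2 hα.2) hTS hTne
      (by simpa only [hasCouplingWithin_toNNReal_iff] using happ) hlip hint measurable_logisticLoss
      hle hΔ hmval hmtval hv1 hv2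
end
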